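/- arXiv:1810.07244 — 2 statements merged into one kernel-verified Lean document; each statement's English description precedes it below -/
import Mathlib

section
/- Let h be an orientation-preserving diffeomorphism of the circle with irrational rotation number, and suppose h is not C∞-conjugate to a rotation. Then every continuous path γ: [0,1] → Z∞(h) (the C∞ centralizer of h, with the uniform topology) is constant. -/
/-- A circle homeomorphism is a `C^∞` diffeomorphism if it and its inverse admit `C^∞`
degree-one lifts `ℝ → ℝ`. -/
def IsSmoothCircleDiffeo (g : UnitAddCircle ≃ₜ UnitAddCircle) : Prop :=
  ∃ G Ginv : ℝ → ℝ, ContDiff ℝ (⊤ : ℕ∞) G ∧ ContDiff ℝ (⊤ : ℕ∞) Ginv ∧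
    (∀ x, G (x + 1) = G x + 1) ∧ (∀ x, Ginv (x + 1) = Ginv x + 1) ∧
    (∀ x : ℝ, ((G x : ℝ) : UnitAddCircle) = g (x : UnitAddCircle)) ∧
    (∀ x : ℝ, ((Ginv x : ℝ) : UnitAddCircle) = g.symm (x : UnitAddCircle))

open Set Filter Topology MeasureTheory Function

theorem aux_baire (M : ℕ → Set ℝ) (hc : ∀ n, IsClosed (M n)) (hU : ⋃ n, M n = univ)
    (hadd : ∀ n, ∃ m, ∀ x ∈ M n, ∀ y ∈ M n, x + y ∈ M m)
    (hper : ∀ n x, ∀ k : ℤ, x ∈ M n → x + k ∈ M n) : ∃ n, M n = univ := by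
  obtain ⟨n, x, hx⟩ := nonempty_interior_of_iUnion_of_closed hc hU
  obtain ⟨r, hr, hball⟩ := Metric.mem_nhds_iff.1 (mem_interior_iff_mem_nhds.1 hx)
  have key : ∀ k : ℕ, ∃ m, ∃ z : ℝ, Metric.ball z (2 ^ k * r) ⊆ M m := by
    intro k
    induction k with
    | zero => exact ⟨n, x, by simpa using hball⟩
    | succ k ih =>
      obtain ⟨m, z, hz⟩ := ih
      obtain ⟨m', hm'⟩ := hadd m
      refine ⟨m', 2 * z, fun y hy => ?_⟩
      have : y / 2 ∈ M m := by
        apply hz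
        rw [Metric.mem_ball, Real.dist_eq] at hy ⊢
        rw [abs_lt] at hy ⊢
        rw [pow_succ] at hy
        constructor <;> linarith [hy.1, hy.2]
      have := hm' _ this _ this
      simpa using this
  obtain ⟨k, hk⟩ := pow_unbounded_of_one_lt (1 / r) (one_lt_two (α := ℝ))
  obtain ⟨m, z, hz⟩ := key k
  refine ⟨m, eq_univ_of_forall fun y => ?_⟩
  have h1 : z + Int.fract (y - z) ∈ M m := by
    apply hz
    rw [Metric.mem_ball, Real.dist_eq]
    have : 1 < 2 ^ k * r := by rwa [div_lt_iff₀ hr] at hk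
    have h0 := Int.fract_nonneg (y - z)
    have h1 := Int.fract_lt_one (y - z)
    rw [abs_lt]; constructor <;> linarith
  have := hper m _ ⌊y - z⌋ h1
  convert this using 1
  have := Int.fract_add_floor (y - z)
  linarith

theorem aux_avg {u : ℝ → ℝ} (hm : Measurable u) (hp : Periodic u 1) {C : ℝ}
    (hb : ∀ x, |u x| ≤ C) (s : ℝ) :
    u s = (∫ c in (0:ℝ)..1, u c) - ∫ c in (0:ℝ)..1, (u (s + c) - u s) := by
  have hintg : IntervalIntegrable (fun c => u (s + c)) volume 0 1 := by
    rw [intervalIntegrable_iff]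
    refine Measure.integrableOn_of_bounded (M := C) (by simp) ?_ ?_
    · exact (hm.comp (measurable_const_add s)).aestronglyMeasurable
    · exact Eventually.of_forall fun x => hb _
  rw [intervalIntegral.integral_sub hintg (by simp)]
  rw [intervalIntegral.integral_comp_add_left (fun c => u c) s]
  have := hp.intervalIntegral_add_eq s 0
  simp only [zero_add] at this
  simp [this]

theorem aux_cont {u : ℝ → ℝ} (hm : Measurable u) (hp : Periodic u 1) {C : ℝ}
    (hb : ∀ x, |u x| ≤ C) (hd : ∀ c, Continuous fun s => u (s + c) - u s) : Continuous u := by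
  have : u = fun s => (∫ c in (0:ℝ)..1, u c) - ∫ c in (0:ℝ)..1, (u (s + c) - u s) :=
    funext fun s => aux_avg hm hp hb s
  rw [this]
  refine continuous_const.sub ?_
  refine intervalIntegral.continuous_of_dominated_interval (bound := fun _ => C + C) ?_ ?_ ?_ ?_
  · intro s
    exact ((hm.comp (measurable_const_add s)).sub measurable_const).aestronglyMeasurable
  · intro s
    refine Eventually.of_forall fun c _ => ?_
    exact (abs_sub _ _).trans (add_le_add (hb _) (hb _))
  · simp
  · exact Eventually.of_forall fun c _ => hd c

theorem aux_bdd {u : ℝ → ℝ} (hc : Continuous u) (hp : Periodic u 1) : ∃ C, 0 ≤ C ∧ ∀ x, |u x| ≤ C := by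
  obtain ⟨C, hC⟩ := (hp.isBounded_of_continuous one_ne_zero hc).exists_norm_le
  refine ⟨C, (norm_nonneg _).trans (hC _ ⟨0, rfl⟩), fun x => hC _ ⟨x, rfl⟩⟩

theorem aux_deriv_per {u : ℝ → ℝ} {k : ℝ} (hp : ∀ x, u (x + 1) = u x + k) : Periodic (deriv u) 1 := by
  intro x
  have : (fun x => u (x + 1)) = fun x => u x + k := funext hp
  rw [← deriv_comp_add_const, this, deriv_add_const]

theorem aux_lip {u : ℝ → ℝ} (hc : ContDiff ℝ 1 u) {k : ℝ} (hp : ∀ x, u (x + 1) = u x + k) :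
    ∃ N : ℕ, ∀ x y, |u x - u y| ≤ N * |x - y| := by
  obtain ⟨C, _, hC⟩ := aux_bdd (hc.continuous_deriv le_rfl) (aux_deriv_per hp)
  obtain ⟨N, hN⟩ := exists_nat_ge C
  refine ⟨N, fun x y => ?_⟩
  have := convex_univ.norm_image_sub_le_of_norm_deriv_le (f := u) (C := N) (x := y) (y := x)
    (fun z _ => hc.differentiable (by norm_num) z) (fun z _ => (hC z).trans hN) (mem_univ _) (mem_univ _)
  simpa using this

theorem aux_C1 {u : ℝ → ℝ} (hc : Continuous u) (hp : Periodic u 1)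
    (hd : ∀ c, ContDiff ℝ 1 fun s => u (s + c) - u s) : ContDiff ℝ 1 u := by
  obtain ⟨N, hN⟩ := aux_baire
    (fun N => {c | ∀ x y, |(u (x + c) - u x) - (u (y + c) - u y)| ≤ N * |x - y|})
    (by
      intro n
      simp only [ofPred_forall]
      refine isClosed_iInter fun x => isClosed_iInter fun y => ?_
      exact isClosed_le (by fun_prop) (by fun_prop))
    (by
      refine eq_univ_of_forall fun c => mem_iUnion.2 ?_
      refine aux_lip (hd c) (k := 0) fun x => ?_
      have e1 := hp x
      have e2 := hp (x + c)
      have : x + 1 + c = x + c + 1 := by ring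
      rw [this, e1, e2, add_zero])
    (by
      intro n
      refine ⟨2 * n, fun c hcm d hdm x y => ?_⟩
      have h1 := hcm (x + d) (y + d)
      have h2 := hdm x y
      have e : x + d - (y + d) = x - y := by ring
      rw [e] at h1
      have : (u (x + (c + d)) - u x) - (u (y + (c + d)) - u y) =
        ((u (x + d + c) - u (x + d)) - (u (y + d + c) - u (y + d))) +
        ((u (x + d) - u x) - (u (y + d) - u y)) := by
        have e1 : x + (c + d) = x + d + c := by ring
        have e2 : y + (c + d) = y + d + c := by ring
        rw [e1, e2]; ring
      rw [this]
      refine (abs_add_le _ _).trans ?_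
      push_cast
      linarith)
    (by
      intro n c k hcm x y
      have h1 := hp.int_mul k (x + c)
      have h2 := hp.int_mul k (y + c)
      have e1 : x + (c + k) = x + c + k * 1 := by ring
      have e2 : y + (c + k) = y + c + k * 1 := by ring
      rw [e1, e2, h1, h2]
      exact hcm x y)
  obtain ⟨C, hC0, hC⟩ := aux_bdd hc hp
  have hL : ∀ x y, |u x - u y| ≤ N * |x - y| := by
    intro x y
    rw [aux_avg hc.measurable hp hC x, aux_avg hc.measurable hp hC y]
    have e : ∀ I A B : ℝ, I - A - (I - B) = B - A := by intros; ring
    rw [e, ← intervalIntegral.integral_sub]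
    · have := intervalIntegral.norm_integral_le_of_norm_le_const (a := 0) (b := 1)
        (f := fun c => (u (y + c) - u y) - (u (x + c) - u x)) (C := N * |x - y|) (by
          intro c _
          have : c ∈ {c | ∀ x y, |(u (x + c) - u x) - (u (y + c) - u y)| ≤ N * |x - y|} := by
            rw [hN]; trivial
          rw [Real.norm_eq_abs, abs_sub_comm]
          exact this x y)
      simpa using this
    · exact Continuous.intervalIntegrable (by fun_prop) _ _
    · exact Continuous.intervalIntegrable (by fun_prop) _ _
  have hLip : LipschitzWith (N : NNReal) u := LipschitzWith.of_dist_le_mul fun x y => by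
    simpa [Real.dist_eq] using hL x y
  obtain ⟨s0, hs0⟩ := hLip.ae_differentiableAt_real.exists
  have hdiff : Differentiable ℝ u := by
    intro s
    have h1 : DifferentiableAt ℝ (fun t => (u (t + (s - s0)) - u t) + u t) s0 :=
      ((hd (s - s0)).differentiable (by norm_num) s0).add hs0
    simp only [sub_add_cancel] at h1
    have h2 : DifferentiableAt ℝ (fun t => u (t + (s - s0))) (s - (s - s0)) := by
      simpa using h1
    have h3 := DifferentiableAt.comp s (f := fun t => t - (s - s0)) h2 (by fun_prop)
    simpa [Function.comp_def] using h3
  rw [contDiff_one_iff_deriv]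
  refine ⟨hdiff, ?_⟩
  refine aux_cont (C := N) (measurable_deriv u) (aux_deriv_per (k := 0) (by simpa using hp)) ?_ ?_
  · intro x
    have := norm_deriv_le_of_lipschitz (x₀ := x) hLip
    simpa using this
  · intro c
    have := (hd c).continuous_deriv le_rfl
    convert this using 2 with s
    rw [deriv_fun_sub, deriv_comp_add_const]
    · exact (hdiff _).comp s (by fun_prop)
    · exact hdiff s

theorem aux_Ck (k : ℕ) : ∀ {u : ℝ → ℝ}, ContDiff ℝ k u → Periodic u 1 →
    (∀ c, ContDiff ℝ (k + 1 : ℕ) fun s => u (s + c) - u s) → ContDiff ℝ (k + 1 : ℕ) u := by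
  induction k with
  | zero =>
    intro u hu hp hd
    simpa using aux_C1 hu.continuous hp (by simpa using hd)
  | succ k ih =>
    intro u hu hp hd
    have hdiff : Differentiable ℝ u := hu.differentiable (by simp)
    have key : ContDiff ℝ (k + 1 : ℕ) (deriv u) := by
      refine ih ?_ (aux_deriv_per (k := 0) (by simpa using hp)) ?_
      · push_cast at hu
        exact (contDiff_succ_iff_deriv.1 hu).2.2
      · intro c
        have := hd c
        rw [Nat.cast_succ] at this
        have := (contDiff_succ_iff_deriv.1 this).2.2
        have e : (fun s => deriv u (s + c) - deriv u s) = deriv fun s => u (s + c) - u s := by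
          funext s
          rw [deriv_fun_sub, deriv_comp_add_const]
          · exact (hdiff _).comp s (by fun_prop)
          · exact hdiff s
        rw [e]
        exact this
    rw [Nat.cast_succ]
    refine contDiff_succ_iff_deriv.2 ⟨hdiff, by simp, key⟩

theorem aux_smooth {φ ψ : ℝ → ℝ} (h1 : ∀ x, ψ (φ x) = x) (h2 : ∀ s, φ (ψ s) = s)
    (hφ : Continuous φ) (hψ : Continuous ψ) (hmono : Monotone ψ)
    (hψ1 : ∀ s, ψ (s + 1) = ψ s + 1)
    (hF : ∀ c, ContDiff ℝ (⊤ : ℕ∞) fun x => ψ (φ x + c)) :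
    ContDiff ℝ (⊤ : ℕ∞) φ ∧ ContDiff ℝ (⊤ : ℕ∞) ψ := by
  have hφ1 : ∀ x, φ (x + 1) = φ x + 1 := by
    intro x
    rw [← h2 (φ x + 1), hψ1, h1]
  set F : ℝ → ℝ → ℝ := fun c x => ψ (φ x + c) with hFdef
  have hFd : ∀ c, Differentiable ℝ (F c) := fun c => (hF c).differentiable (by simp)
  have hFψ : ∀ c s, F c (ψ s) = ψ (s + c) := by intro c s; simp [hFdef, h2]
  have hFF : ∀ c d x, F c (F d x) = F (c + d) x := by
    intro c d x; simp only [hFdef, h2]; congr 1; ring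
  have hF1 : ∀ c x, F c (x + 1) = F c x + 1 := by
    intro c x
    simp only [hFdef, hφ1]
    rw [← hψ1]; congr 1; ring
  have hψk : ∀ (k : ℤ) s, ψ (s + k) = ψ s + k := by
    let f : CircleDeg1Lift := ⟨⟨ψ, hmono⟩, hψ1⟩
    intro k s
    exact f.map_add_int s k
  -- derivative transport
  have hder : ∀ s c d, HasDerivAt ψ d s → HasDerivAt ψ (deriv (F c) (ψ s) * d) (s + c) := by
    intro s c d hd
    have h3 : HasDerivAt (F c ∘ ψ) (deriv (F c) (ψ s) * d) s :=
      (hFd c (ψ s)).hasDerivAt.comp s hd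
    have h4 : HasDerivAt (F c ∘ ψ) (deriv (F c) (ψ s) * d) (s + c - c) := by simpa using h3
    have h5 := h4.comp_sub_const (s + c) c
    simpa [Function.comp_def, hFψ] using h5
  obtain ⟨s0, hs0⟩ := hmono.ae_differentiableAt.exists
  have hdiff : Differentiable ℝ ψ := by
    intro s
    have := hder s0 (s - s0) _ hs0.hasDerivAt
    rw [add_sub_cancel] at this
    exact this.differentiableAt
  have hder' : ∀ s c, deriv ψ (s + c) = deriv (F c) (ψ s) * deriv ψ s := fun s c =>
    (hder s c _ (hdiff s).hasDerivAt).deriv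
  have hne : ∀ s, deriv ψ s ≠ 0 := by
    intro s hs
    have hz : ∀ t, deriv ψ t = 0 := by
      intro t
      have := hder' s (t - s)
      rw [hs, mul_zero, add_sub_cancel] at this
      exact this
    have := is_const_of_deriv_eq_zero hdiff hz 0 1
    have h3 := hψ1 0
    rw [zero_add] at h3
    linarith
  have hpos : ∀ s, 0 < deriv ψ s := fun s => lt_of_le_of_ne hmono.deriv_nonneg (hne s).symm
  have hFpos : ∀ c s, 0 < deriv (F c) (ψ s) := by
    intro c s
    have h3 := hpos (s + c)
    rw [hder'] at h3
    exact pos_of_mul_pos_left h3 (hpos s).le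
  obtain ⟨N, hN⟩ := aux_baire (fun N => {c | ∀ x y, |F c x - F c y| ≤ N * |x - y|})
    (by
      intro n
      simp only [ofPred_forall]
      refine isClosed_iInter fun x => isClosed_iInter fun y => ?_
      exact isClosed_le (by fun_prop) (by fun_prop))
    (by
      refine eq_univ_of_forall fun c => mem_iUnion.2 ?_
      exact aux_lip ((hF c).of_le (by exact_mod_cast le_top)) (hF1 c))
    (by
      intro n
      refine ⟨n * n, fun c hcm d hdm x y => ?_⟩
      rw [← hFF, ← hFF]
      refine (hcm _ _).trans ?_
      push_cast
      rw [mul_assoc]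
      exact mul_le_mul_of_nonneg_left (hdm x y) (Nat.cast_nonneg _))
    (by
      intro n c k hcm x y
      have e : ∀ z, F (c + k) z = F c z + k := by
        intro z
        simp only [hFdef]
        rw [← hψk]; congr 1; ring
      rw [e, e]
      simpa using hcm x y)
  have hFle : ∀ c x, deriv (F c) x ≤ N := by
    intro c x
    have hL : LipschitzWith (N : NNReal) (F c) := LipschitzWith.of_dist_le_mul fun x y => by
      have : c ∈ {c | ∀ x y, |F c x - F c y| ≤ N * |x - y|} := by rw [hN]; trivial
      simpa [Real.dist_eq] using this x y
    have := norm_deriv_le_of_lipschitz (x₀ := x) hL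
    exact (le_abs_self _).trans (by simpa using this)
  have hle : ∀ s t, deriv ψ t ≤ N * deriv ψ s := by
    intro s t
    have := hder' s (t - s)
    rw [add_sub_cancel] at this
    rw [this]
    exact mul_le_mul_of_nonneg_right (hFle _ _) (hpos s).le
  have hNpos : (0:ℝ) < N := (hFpos 0 0).trans_le (hFle _ _)
  set u : ℝ → ℝ := fun s => Real.log (deriv ψ s) with hu
  have hup : Periodic u 1 := fun s => by
    simp only [hu]; rw [aux_deriv_per hψ1 s]
  have hud : ∀ c, (fun s => u (s + c) - u s) = fun s => Real.log (deriv (F c) (ψ s)) := by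
    intro c; funext s
    simp only [hu]
    rw [hder', Real.log_mul (hFpos c s).ne' (hne s)]; ring
  have hum : Measurable u := Real.measurable_log.comp (measurable_deriv ψ)
  have hub : ∀ s, |u s| ≤ |u 0| + Real.log N := by
    intro s
    have a1 : u s ≤ Real.log N + u 0 := by
      simp only [hu]
      rw [← Real.log_mul hNpos.ne' (hne 0)]
      exact Real.log_le_log (hpos s) (hle 0 s)
    have a2 : u 0 ≤ Real.log N + u s := by
      simp only [hu]
      rw [← Real.log_mul hNpos.ne' (hne s)]
      exact Real.log_le_log (hpos 0) (hle s 0)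
    rw [abs_le]
    constructor <;> linarith [le_abs_self (u 0), neg_abs_le (u 0)]
  have hFdd : ∀ c, ContDiff ℝ (⊤ : ℕ∞) (deriv (F c)) := by
    intro c
    have := hF c
    rw [show ((⊤ : ℕ∞) : WithTop ℕ∞) = (⊤ : ℕ∞) + 1 from rfl] at this
    exact (contDiff_succ_iff_deriv.1 this).2.2
  have huc : Continuous u := by
    refine aux_cont hum hup hub fun c => ?_
    rw [hud]
    exact ((hFdd c).continuous.comp hψ).log fun s => (hFpos c s).ne'
  have hψ_of : ∀ k : ℕ, ContDiff ℝ k u → ContDiff ℝ (k + 1 : ℕ) ψ := by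
    intro k hk
    rw [Nat.cast_succ]
    refine contDiff_succ_iff_deriv.2 ⟨hdiff, by simp, ?_⟩
    have : deriv ψ = fun s => Real.exp (u s) := by
      funext s; simp only [hu]; rw [Real.exp_log (hpos s)]
    rw [this]
    exact hk.exp
  have huk : ∀ k : ℕ, ContDiff ℝ k u := by
    intro k
    induction k with
    | zero => exact contDiff_zero.2 huc
    | succ k ih =>
      refine aux_Ck k ih hup fun c => ?_
      rw [hud]
      have h3 : ContDiff ℝ (k + 1 : ℕ) (deriv (F c)) :=
        (hFdd c).of_le (by exact_mod_cast le_top)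
      exact (h3.comp (hψ_of k ih)).log fun s => (hFpos c s).ne'
  have hψs : ContDiff ℝ (⊤ : ℕ∞) ψ := by
    rw [contDiff_infty]
    intro n
    exact (hψ_of n (huk n)).of_le (by exact_mod_cast Nat.le_succ n)
  refine ⟨?_, hψs⟩
  let e : ℝ ≃ₜ ℝ := ⟨⟨ψ, φ, h2, h1⟩, hψ, hφ⟩
  exact e.contDiff_symm_deriv hne (fun s => (hdiff s).hasDerivAt) hψs

/-- Smooth degree-one lifts together with their inverses. -/
structure SmoothLift (G Gi : ℝ → ℝ) : Prop where
  smooth : ContDiff ℝ (⊤ : ℕ∞) G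
  smooth_inv : ContDiff ℝ (⊤ : ℕ∞) Gi
  add_one : ∀ x, G (x + 1) = G x + 1
  left_inv : ∀ x, Gi (G x) = x
  right_inv : ∀ x, G (Gi x) = x
  mono : StrictMono G

namespace SmoothLift
variable {G Gi K Ki : ℝ → ℝ}

theorem mono_inv (h : SmoothLift G Gi) : StrictMono Gi := by
  intro x y hxy
  rw [← h.mono.lt_iff_lt, h.right_inv, h.right_inv]
  exact hxy

theorem add_one_inv (h : SmoothLift G Gi) (x : ℝ) : Gi (x + 1) = Gi x + 1 := by
  rw [← h.mono.injective.eq_iff, h.right_inv, h.add_one, h.right_inv]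

theorem symm (h : SmoothLift G Gi) : SmoothLift Gi G :=
  ⟨h.smooth_inv, h.smooth, h.add_one_inv, h.right_inv, h.left_inv, h.mono_inv⟩

theorem comp (h : SmoothLift G Gi) (k : SmoothLift K Ki) :
    SmoothLift (fun x => G (K x)) (fun x => Ki (Gi x)) where
  smooth := h.smooth.comp k.smooth
  smooth_inv := k.smooth_inv.comp h.smooth_inv
  add_one x := by rw [k.add_one, h.add_one]
  left_inv x := by rw [h.left_inv, k.left_inv]
  right_inv x := by rw [k.right_inv, h.right_inv]
  mono := fun x y hxy => h.mono (k.mono hxy)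

theorem diff (h : SmoothLift G Gi) : Differentiable ℝ G := h.smooth.differentiable (by simp)

theorem deriv_pos (h : SmoothLift G Gi) (x : ℝ) : 0 < deriv G x := by
  refine lt_of_le_of_ne h.mono.monotone.deriv_nonneg fun h0 => ?_
  have h1 : HasDerivAt (Gi ∘ G) (deriv Gi (G x) * deriv G x) x :=
    (h.symm.diff (G x)).hasDerivAt.comp x (h.diff x).hasDerivAt
  have h2 : Gi ∘ G = id := funext h.left_inv
  rw [h2] at h1
  have := h1.unique (hasDerivAt_id x)
  rw [← h0] at this
  simp at this

theorem smooth_deriv (h : SmoothLift G Gi) : ContDiff ℝ (⊤ : ℕ∞) (deriv G) := by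
  have := h.smooth
  rw [show ((⊤ : ℕ∞) : WithTop ℕ∞) = (⊤ : ℕ∞) + 1 from rfl] at this
  exact (contDiff_succ_iff_deriv.1 this).2.2

theorem iterate (h : SmoothLift G Gi) (n : ℕ) : SmoothLift (G^[n]) (Gi^[n]) := by
  induction n with
  | zero => exact ⟨contDiff_id, contDiff_id, fun _ => rfl, fun _ => rfl, fun _ => rfl, strictMono_id⟩
  | succ n ih =>
    have := h.comp ih
    have e1 : (fun x => G (G^[n] x)) = G^[n + 1] := by
      funext x; rw [Function.iterate_succ_apply']
    have e2 : (fun x => Gi^[n] (Gi x)) = Gi^[n + 1] := by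
      funext x; rw [Function.iterate_succ_apply]
    rw [← e1, ← e2]
    exact this

theorem log_lip (h : SmoothLift G Gi) :
    ∃ N : ℕ, ∀ x y, |Real.log (deriv G x) - Real.log (deriv G y)| ≤ N * |x - y| := by
  refine aux_lip (u := fun x => Real.log (deriv G x)) (k := 0) ?_ ?_
  · exact (h.smooth_deriv.log fun x => (h.deriv_pos x).ne').of_le (by exact_mod_cast le_top)
  · intro x
    show Real.log _ = Real.log _ + 0
    rw [aux_deriv_per h.add_one x, add_zero]

end SmoothLift

section kopell
variable {H Hi φ : ℝ → ℝ} {α : ℝ}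

theorem aux_phi_iter (hφH : ∀ x, φ (H x) = φ x + α) (n : ℕ) (x : ℝ) :
    φ (H^[n] x) = φ x + n * α := by
  induction n with
  | zero => simp
  | succ n ih => rw [Function.iterate_succ_apply', hφH, ih]; push_cast; ring

theorem aux_sum (hH : SmoothLift H Hi) (hα : Irrational α) (hφ : Monotone φ)
    (hφ1 : ∀ x, φ (x + 1) = φ x + 1) (hφH : ∀ x, φ (H x) = φ x + α)
    {a b : ℝ} (hab : a < b) (he : φ a = φ b) (N : ℕ) :
    ∑ n ∈ Finset.range N, (H^[n] b - H^[n] a) ≤ 2 := by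
  let f : CircleDeg1Lift := ⟨⟨φ, hφ⟩, hφ1⟩
  have hφk : ∀ x (k : ℤ), φ (x - k) = φ x - k := fun x k => f.map_sub_int x k
  let S : ℕ → Set ℝ := fun n => Icc (H^[n] a - ⌊n * α⌋) (H^[n] b - ⌊n * α⌋)
  have hS : ∀ n, ∀ x ∈ S n, φ x = φ a + Int.fract (n * α) := by
    intro n x hx
    have h1 := hφ hx.1
    have h2 := hφ hx.2
    rw [hφk, aux_phi_iter hφH] at h1 h2
    rw [← he] at h2
    rw [← Int.self_sub_floor]
    linarith
  have hsub : ∀ n, S n ⊆ Icc (a - 1) (a + 1) := by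
    intro n x hx
    have h1 := hS n x hx
    have h2 := Int.fract_nonneg (n * α)
    have h3 := Int.fract_lt_one (n * α)
    constructor
    · by_contra! hlt
      have := hφ hlt.le
      have e := hφk a 1
      push_cast at e
      linarith
    · by_contra! hlt
      have := hφ hlt.le
      rw [hφ1] at this
      linarith
  have hdisj : (Finset.range N : Set ℕ).PairwiseDisjoint S := by
    intro m _ n _ hmn
    rw [Function.onFun, Set.disjoint_left]
    intro x hx hy
    have h1 := hS m x hx
    have h2 := hS n x hy
    have h3 : Int.fract (m * α) = Int.fract (n * α) := by linarith
    rw [Int.fract_eq_fract] at h3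
    obtain ⟨z, hz⟩ := h3
    have h4 : ((m : ℤ) - (n : ℤ) : ℤ) ≠ 0 := by omega
    have h5 : Irrational (((m : ℤ) - (n : ℤ) : ℤ) * α) := hα.intCast_mul h4
    apply h5.ne_int z
    push_cast
    linarith
  have hvol : ∀ n, volume (S n) = ENNReal.ofReal (H^[n] b - H^[n] a) := by
    intro n
    simp only [S]
    rw [Real.volume_Icc]; congr 1; ring
  have hnn : ∀ n, 0 ≤ H^[n] b - H^[n] a := fun n =>
    sub_nonneg.2 ((hH.iterate n).mono.monotone hab.le)
  have h1 : volume (⋃ n ∈ Finset.range N, S n) ≤ volume (Icc (a - 1) (a + 1)) :=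
    measure_mono (iUnion₂_subset fun n _ => hsub n)
  rw [measure_biUnion_finset hdisj (fun n _ => measurableSet_Icc)] at h1
  simp only [hvol] at h1
  rw [← ENNReal.ofReal_sum_of_nonneg (fun n _ => hnn n), Real.volume_Icc,
    ENNReal.ofReal_le_ofReal_iff (by linarith)] at h1
  linarith

theorem aux_distort (hH : SmoothLift H Hi) {L : ℝ}
    (hL : ∀ x y, |Real.log (deriv H x) - Real.log (deriv H y)| ≤ L * |x - y|) (hL0 : 0 ≤ L)
    {a b x y : ℝ} (hx : x ∈ Icc a b) (hy : y ∈ Icc a b) (n : ℕ) :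
    Real.log (deriv H^[n] y) - Real.log (deriv H^[n] x) ≤
      L * ∑ i ∈ Finset.range n, (H^[i] b - H^[i] a) := by
  induction n with
  | zero => simp
  | succ n ih =>
    have hd : ∀ z, deriv H^[n + 1] z = deriv H (H^[n] z) * deriv H^[n] z := by
      intro z
      have h1 := (hH.diff (H^[n] z)).hasDerivAt.comp z ((hH.iterate n).diff z).hasDerivAt
      rw [← Function.iterate_succ'] at h1
      exact h1.deriv
    rw [hd, hd, Real.log_mul (hH.deriv_pos _).ne' ((hH.iterate n).deriv_pos _).ne',
      Real.log_mul (hH.deriv_pos _).ne' ((hH.iterate n).deriv_pos _).ne', Finset.sum_range_succ]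
    have h2 := (le_abs_self _).trans (hL (H^[n] y) (H^[n] x))
    have hm := (hH.iterate n).mono.monotone
    have h3 : |H^[n] y - H^[n] x| ≤ H^[n] b - H^[n] a := by
      rw [abs_le]
      constructor <;> linarith [hm hx.1, hm hx.2, hm hy.1, hm hy.2]
    have h4 := mul_le_mul_of_nonneg_left h3 hL0
    linarith

theorem aux_kopell_deriv (hH : SmoothLift H Hi) (hα : Irrational α) (hφ : Monotone φ)
    (hφ1 : ∀ x, φ (x + 1) = φ x + 1) (hφH : ∀ x, φ (H x) = φ x + α) {L : ℝ}
    (hL : ∀ x y, |Real.log (deriv H x) - Real.log (deriv H y)| ≤ L * |x - y|) (hL0 : 0 ≤ L)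
    {P Pi : ℝ → ℝ} (hP : SmoothLift P Pi) (hcomm : ∀ x, P (H x) = H (P x))
    {a b : ℝ} (hab : a < b) (he : φ a = φ b) (ha : P a = a) (hb : P b = b) {x : ℝ}
    (hx : x ∈ Icc a b) : Real.exp (-(L * 2)) ≤ deriv P x := by
  have hsum := aux_sum hH hα hφ hφ1 hφH hab he
  have hnn : ∀ n, 0 ≤ H^[n] b - H^[n] a := fun n =>
    sub_nonneg.2 ((hH.iterate n).mono.monotone hab.le)
  have hsummable : Summable fun n => H^[n] b - H^[n] a :=
    summable_of_sum_range_le hnn hsum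
  have hlim := hsummable.tendsto_atTop_zero
  have hcn : ∀ n z, P (H^[n] z) = H^[n] (P z) := fun n z =>
    ((show Function.Commute P H from hcomm).iterate_right n) z
  obtain ⟨N, hN⟩ := aux_lip (hP.smooth_deriv.of_le (by exact_mod_cast le_top))
    (k := 0) (fun x => by rw [aux_deriv_per hP.add_one x, add_zero])
  have hPx : P x ∈ Icc a b := by
    constructor
    · rw [← ha]; exact hP.mono.monotone hx.1
    · rw [← hb]; exact hP.mono.monotone hx.2
  have key : ∀ n, Real.exp (-(L * 2)) * (1 - N * (H^[n] b - H^[n] a)) ≤ deriv P x := by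
    intro n
    have hlt : H^[n] a < H^[n] b := (hH.iterate n).mono hab
    obtain ⟨ξ, hξ, hξ'⟩ := exists_deriv_eq_slope P hlt hP.smooth.continuous.continuousOn
      hP.diff.differentiableOn
    rw [hcn, hcn, ha, hb, div_self (sub_pos.2 hlt).ne'] at hξ'
    have hm := (hH.iterate n).mono.monotone
    have h1 : 1 - N * (H^[n] b - H^[n] a) ≤ deriv P (H^[n] x) := by
      have h2 := (abs_le.1 (hN (H^[n] x) ξ)).1
      rw [hξ'] at h2
      have h3 : |H^[n] x - ξ| ≤ H^[n] b - H^[n] a := by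
        rw [abs_le]
        constructor <;> linarith [hm hx.1, hm hx.2, hξ.1, hξ.2]
      have h4 := mul_le_mul_of_nonneg_left h3 (Nat.cast_nonneg (α := ℝ) N)
      linarith
    have e1 : HasDerivAt (P ∘ H^[n]) (deriv P (H^[n] x) * deriv H^[n] x) x :=
      (hP.diff _).hasDerivAt.comp x ((hH.iterate n).diff x).hasDerivAt
    have e2 : HasDerivAt (H^[n] ∘ P) (deriv H^[n] (P x) * deriv P x) x :=
      ((hH.iterate n).diff _).hasDerivAt.comp x (hP.diff x).hasDerivAt
    have e3 : P ∘ H^[n] = H^[n] ∘ P := funext (hcn n)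
    rw [e3] at e1
    have e4 := e1.unique e2
    have p1 := (hH.iterate n).deriv_pos x
    have p2 := (hH.iterate n).deriv_pos (P x)
    have h5 := aux_distort hH hL hL0 hx hPx n
    have h6 : L * ∑ i ∈ Finset.range n, (H^[i] b - H^[i] a) ≤ L * 2 :=
      mul_le_mul_of_nonneg_left (hsum n) hL0
    have h7 : deriv H^[n] (P x) * Real.exp (-(L * 2)) ≤ deriv H^[n] x := by
      rw [← Real.log_le_log_iff (by positivity) p1, Real.log_mul p2.ne' (Real.exp_pos _).ne',
        Real.log_exp]
      linarith
    have p3 := hP.deriv_pos (H^[n] x)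
    have h8 : deriv H^[n] (P x) * (Real.exp (-(L * 2)) * deriv P (H^[n] x)) ≤
        deriv H^[n] (P x) * deriv P x := by
      rw [← e4]
      have := mul_le_mul_of_nonneg_left h7 p3.le
      linarith
    have h9 := le_of_mul_le_mul_left h8 p2
    exact (mul_le_mul_of_nonneg_left h1 (Real.exp_pos _).le).trans h9
  have hl2 : Tendsto (fun n => Real.exp (-(L * 2)) * (1 - N * (H^[n] b - H^[n] a))) atTop
      (𝓝 (Real.exp (-(L * 2)) * (1 - N * 0))) :=
    (tendsto_const_nhds.sub (hlim.const_mul _)).const_mul _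
  simp only [mul_zero, sub_zero, mul_one] at hl2
  exact le_of_tendsto' hl2 key

theorem aux_kopell (hH : SmoothLift H Hi) (hα : Irrational α) (hφ : Monotone φ)
    (hφc : Continuous φ)
    (hφ1 : ∀ x, φ (x + 1) = φ x + 1) (hφH : ∀ x, φ (H x) = φ x + α)
    {G Gi : ℝ → ℝ} (hG : SmoothLift G Gi) (hcomm : ∀ x, G (H x) = H (G x))
    (hφG : ∀ x, φ (G x) = φ x) (x : ℝ) : G x = x := by
  by_contra hne
  have hφ1' : φ (x - 1) = φ x - 1 := by
    have := hφ1 (x - 1)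
    rw [sub_add_cancel] at this
    linarith
  -- the plateau
  set I : Set ℝ := φ ⁻¹' {φ x} with hI
  have hIc : IsClosed I := isClosed_singleton.preimage hφc
  have hIsub : I ⊆ Icc (x - 1) (x + 1) := by
    intro y hy
    have hy' : φ y = φ x := hy
    constructor
    · by_contra! hlt
      have := hφ hlt.le
      linarith
    · by_contra! hlt
      have := hφ hlt.le
      rw [hφ1] at this
      linarith
  have hIk : IsCompact I := isCompact_Icc.of_isClosed_subset hIc hIsub
  have hxI : x ∈ I := rfl
  have hGI : ∀ y ∈ I, G y ∈ I := fun y hy => (hφG y).trans hy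
  have hGiI : ∀ y ∈ I, Gi y ∈ I := fun y hy => by
    have := hφG (Gi y)
    rw [hG.right_inv] at this
    exact this.symm.trans hy
  obtain ⟨a, haI, ha⟩ := hIk.exists_isLeast ⟨x, hxI⟩
  obtain ⟨b, hbI, hb⟩ := hIk.exists_isGreatest ⟨x, hxI⟩
  have hGa : G a = a := by
    refine le_antisymm ?_ (ha (hGI a haI))
    have := hG.mono.monotone (ha (hGiI a haI))
    rwa [hG.right_inv] at this
  have hGb : G b = b := by
    refine le_antisymm (hb (hGI b hbI)) ?_
    have := hG.mono.monotone (hb (hGiI b hbI))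
    rwa [hG.right_inv] at this
  have hab : a < b := by
    rcases lt_or_gt_of_ne hne with h | h
    · exact (ha (hGI x hxI)).trans_lt (h.trans_le (hb hxI))
    · exact (ha hxI).trans_lt (h.trans_le (hb (hGI x hxI)))
  have he : φ a = φ b := (show φ a = φ x from haI).trans (show φ b = φ x from hbI).symm
  obtain ⟨L, hL⟩ := hH.log_lip
  have hδ := Real.exp_pos (-((L : ℝ) * 2))
  set δ := Real.exp (-((L : ℝ) * 2)) with hδd
  have hxab : x ∈ Icc a b := ⟨ha hxI, hb hxI⟩
  have hGxab : G x ∈ Icc a b := ⟨ha (hGI x hxI), hb (hGI x hxI)⟩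
  have hexp : ∀ n : ℕ, δ * |G x - x| ≤ |G^[n + 1] x - G^[n] x| := by
    intro n
    have hGn := hG.iterate n
    have hd : ∀ y ∈ Icc a b, δ ≤ deriv G^[n] y := fun y hy =>
      aux_kopell_deriv hH hα hφ hφ1 hφH hL (Nat.cast_nonneg _) hGn
        (fun z => ((show Function.Commute G H from hcomm).iterate_left n) z) hab he
        (Function.iterate_fixed hGa n) (Function.iterate_fixed hGb n) hy
    have hmv : ∀ y ∈ Icc a b, ∀ z ∈ Icc a b, y ≤ z → δ * (z - y) ≤ G^[n] z - G^[n] y :=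
      (convex_Icc a b).mul_sub_le_image_sub_of_le_deriv hGn.smooth.continuous.continuousOn
        hGn.diff.differentiableOn (fun y hy => hd y (interior_subset hy))
    rw [Function.iterate_succ_apply]
    rcases le_total x (G x) with h | h
    · rw [abs_of_nonneg (sub_nonneg.2 h)]
      exact (hmv _ hxab _ hGxab h).trans (le_abs_self _)
    · rw [abs_sub_comm, abs_of_nonneg (sub_nonneg.2 h), abs_sub_comm]
      exact (hmv _ hGxab _ hxab h).trans (le_abs_self _)
  have horb : ∀ n, G^[n] x ∈ Icc a b := by
    intro n
    have hm := (hG.iterate n).mono.monotone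
    constructor
    · have := hm hxab.1
      rwa [Function.iterate_fixed hGa n] at this
    · have := hm hxab.2
      rwa [Function.iterate_fixed hGb n] at this
  have hconv : ∃ l, Tendsto (fun n => G^[n] x) atTop (𝓝 l) := by
    rcases le_total x (G x) with h | h
    · have hmon : Monotone fun n => G^[n] x := hG.mono.monotone.monotone_iterate_of_le_map h
      exact ⟨_, tendsto_atTop_ciSup hmon ⟨b, by rintro _ ⟨n, rfl⟩; exact (horb n).2⟩⟩
    · have hmon : Antitone fun n => G^[n] x := hG.mono.monotone.antitone_iterate_of_map_le h
      exact ⟨_, tendsto_atTop_ciInf hmon ⟨a, by rintro _ ⟨n, rfl⟩; exact (horb n).1⟩⟩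
  obtain ⟨l, hl⟩ := hconv
  have hz : Tendsto (fun n => |G^[n + 1] x - G^[n] x|) atTop (𝓝 |l - l|) :=
    ((hl.comp (tendsto_add_atTop_nat 1)).sub hl).abs
  have h0 := ge_of_tendsto' hz hexp
  rw [sub_self, abs_zero] at h0
  have : 0 < |G x - x| := abs_pos.2 (sub_ne_zero.2 hne)
  have := mul_pos hδ this
  linarith

end kopell

section circle

theorem aux_coe_eq {x y : ℝ} : (x : UnitAddCircle) = y ↔ ∃ k : ℤ, x = y + k := by
  rw [← sub_eq_zero, ← AddCircle.coe_sub, AddCircle.coe_eq_zero_iff]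
  constructor
  · rintro ⟨n, hn⟩
    refine ⟨n, ?_⟩
    simp at hn
    linarith
  · rintro ⟨n, hn⟩
    refine ⟨n, ?_⟩
    simp [hn]

theorem aux_int_const {f : ℝ → ℝ} (hf : Continuous f) (h : ∀ x, ∃ k : ℤ, f x = k) :
    ∃ k : ℤ, ∀ x, f x = k := by
  choose k hk using h
  have hkc : Continuous k := by
    rw [Int.isClosedEmbedding_coe_real.isEmbedding.continuous_iff]
    convert hf using 1
    funext x
    exact (hk x).symm
  refine ⟨k 0, fun x => ?_⟩
  rw [hk x, PreconnectedSpace.constant inferInstance hkc (x := x) (y := 0)]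

theorem aux_deg_int {f : ℝ → ℝ} (hf : ∀ x, f (x + 1) = f x + 1) (x : ℝ) (k : ℤ) :
    f (x + k) = f x + k := by
  have hp : Periodic (fun x => f x - x) 1 := fun x => by
    show f (x + 1) - (x + 1) = f x - x
    rw [hf]; ring
  have := hp.int_mul k x
  simp only [mul_one] at this
  linarith

theorem SmoothLift.sub_int {G Gi : ℝ → ℝ} (h : SmoothLift G Gi) (k : ℝ) :
    SmoothLift (fun x => G x + k) (fun x => Gi (x - k)) where
  smooth := h.smooth.add contDiff_const
  smooth_inv := h.smooth_inv.comp (contDiff_id.sub contDiff_const)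
  add_one x := by rw [h.add_one]; ring
  left_inv x := by rw [add_sub_cancel_right, h.left_inv]
  right_inv x := by rw [h.right_inv, sub_add_cancel]
  mono := fun x y hxy => by
    have := h.mono hxy
    show G x + k < G y + k
    linarith

theorem aux_exists_lift {g : UnitAddCircle ≃ₜ UnitAddCircle} (hg : IsSmoothCircleDiffeo g) :
    ∃ G Gi : ℝ → ℝ, SmoothLift G Gi ∧ ∀ x : ℝ, ((G x : ℝ) : UnitAddCircle) = g x := by
  obtain ⟨G, Gi, hG, hGi, hG1, hGi1, hGg, hGig⟩ := hg
  have hinj : Injective G := by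
    intro x y hxy
    have h1 : (x : UnitAddCircle) = y := by
      apply g.injective
      rw [← hGg, ← hGg, hxy]
    obtain ⟨k, hk⟩ := aux_coe_eq.1 h1
    rw [hk, aux_deg_int hG1] at hxy
    rw [hk]
    linarith
  have hmono : StrictMono G := by
    rcases hG.continuous.strictMono_of_inj hinj with h | h
    · exact h
    · exfalso
      have h1 := h (zero_lt_one (α := ℝ))
      have h2 := hG1 0
      rw [zero_add] at h2
      linarith
  obtain ⟨k, hk⟩ := aux_int_const (f := fun x => Gi (G x) - x)
    ((hGi.continuous.comp hG.continuous).sub continuous_id) (fun x => by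
      have : ((Gi (G x) : ℝ) : UnitAddCircle) = x := by
        rw [hGig, hGg, g.symm_apply_apply]
      obtain ⟨k, hk⟩ := aux_coe_eq.1 this
      exact ⟨k, by linarith⟩)
  obtain ⟨k', hk'⟩ := aux_int_const (f := fun x => G (Gi x) - x)
    ((hG.continuous.comp hGi.continuous).sub continuous_id) (fun x => by
      have : ((G (Gi x) : ℝ) : UnitAddCircle) = x := by
        rw [hGg, hGig, g.apply_symm_apply]
      obtain ⟨k, hk⟩ := aux_coe_eq.1 this
      exact ⟨k, by linarith⟩)
  have hleft : ∀ x, Gi (G x) - k = x := fun x => by linarith [hk x]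
  have hsurj : ∀ y, G (Gi y - k) = y := by
    intro y
    have h1 : G (Gi y - k') = y := by
      have := aux_deg_int hG1 (Gi y - k') k'
      rw [sub_add_cancel] at this
      linarith [hk' y]
    have h2 := hk (Gi y - k')
    simp only [h1] at h2
    have h3 : (k : ℝ) = k' := by linarith
    rw [h3, h1]
  exact ⟨G, fun x => Gi x - k, ⟨hG, hGi.sub contDiff_const, hG1, hleft, hsurj, hmono⟩, hGg⟩

theorem aux_rot_lift {h : UnitAddCircle ≃ₜ UnitAddCircle} {G Gi : ℝ → ℝ} (hG : SmoothLift G Gi)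
    (hGh : ∀ x : ℝ, ((G x : ℝ) : UnitAddCircle) = h x) (H : CircleDeg1Lift)
    (hH : ∀ x : ℝ, ((H x : ℝ) : UnitAddCircle) = h x) : ∃ Hi, SmoothLift H Hi := by
  have h0 : ∀ x, ∃ k : ℤ, H x = G x + k := fun x => aux_coe_eq.1 ((hH x).trans (hGh x).symm)
  choose k hk using h0
  have hle : ∀ x y, x ≤ y → y < x + 1 → k x ≤ k y := by
    intro x y hxy hyx
    have h1 := H.monotone hxy
    have h2 := hG.mono hyx
    rw [hG.add_one] at h2
    rw [hk, hk] at h1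
    have : (k x : ℝ) < k y + 1 := by linarith
    have : k x < k y + 1 := by exact_mod_cast this
    omega
  have hper : Periodic k 1 := by
    intro x
    have h1 := H.map_add_one x
    rw [hk, hk, hG.add_one] at h1
    have : (k (x + 1) : ℝ) = k x := by linarith
    exact_mod_cast this
  have hconst : ∀ x y, x ≤ y → y < x + 1 → k x = k y := by
    intro x y hxy hyx
    refine le_antisymm (hle x y hxy hyx) ?_
    rcases hxy.lt_or_eq with h | h
    · have := hle y (x + 1) hyx.le (by linarith)
      rwa [hper x] at this
    · rw [h]
  have hall : ∀ x, k x = k 0 := by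
    intro x
    have h1 := hconst 0 (Int.fract x) (Int.fract_nonneg x) (by linarith [Int.fract_lt_one x])
    rw [h1]
    have := hper.sub_zsmul_eq (x := x) ⌊x⌋
    rw [← this, ← Int.self_sub_floor]
    simp
  refine ⟨fun x => Gi (x - k 0), ?_⟩
  have e : (H : ℝ → ℝ) = fun x => G x + k 0 := funext fun x => by rw [hk, hall]
  rw [e]
  exact hG.sub_int _

theorem aux_points {H Hi : ℝ → ℝ} (hH : SmoothLift H Hi) {α : ℝ} {d : ℝ}
    (hd : d ∈ AddSubgroup.closure ({α, 1} : Set ℝ)) :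
    ∃ T Ti : ℝ → ℝ, ∀ ψ : ℝ → ℝ, (∀ x, ψ (x + 1) = ψ x + 1) → (∀ x, ψ (H x) = ψ x + α) →
      ∀ x, ψ (T x) = ψ x + d ∧ ψ (Ti x) = ψ x - d := by
  induction hd using AddSubgroup.closure_induction with
  | mem d hd =>
    rcases hd with rfl | rfl
    · refine ⟨H, Hi, fun ψ _ h2 x => ⟨h2 x, ?_⟩⟩
      have := h2 (Hi x)
      rw [hH.right_inv] at this
      linarith
    · refine ⟨fun x => x + 1, fun x => x - 1, fun ψ h1 _ x => ⟨h1 x, ?_⟩⟩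
      have := h1 (x - 1)
      rw [sub_add_cancel] at this
      show ψ (x - 1) = ψ x - 1
      linarith
  | zero => exact ⟨id, id, fun ψ _ _ x => by simp⟩
  | add d e _ _ ihd ihe =>
    obtain ⟨T, Ti, hT⟩ := ihd
    obtain ⟨S, Si, hS⟩ := ihe
    refine ⟨fun x => T (S x), fun x => Ti (Si x), fun ψ h1 h2 x => ⟨?_, ?_⟩⟩
    · rw [(hT ψ h1 h2 _).1, (hS ψ h1 h2 _).1]; ring
    · rw [(hT ψ h1 h2 _).2, (hS ψ h1 h2 _).2]; ring
  | neg d _ ih =>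
    obtain ⟨T, Ti, hT⟩ := ih
    refine ⟨Ti, T, fun ψ h1 h2 x => ⟨?_, ?_⟩⟩
    · rw [(hT ψ h1 h2 _).2]; ring
    · rw [(hT ψ h1 h2 _).1]; ring

theorem aux_dense {α : ℝ} (hα : Irrational α) :
    Dense (AddSubgroup.closure ({α, 1} : Set ℝ) : Set ℝ) :=
  dense_addSubgroupClosure_pair_iff.2 (by simpa using hα)

theorem aux_unique {H Hi : ℝ → ℝ} (hH : SmoothLift H Hi) {α : ℝ} (hα : Irrational α)
    {φ ψ : ℝ → ℝ} (hφ : Monotone φ) (hψ : Monotone ψ)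
    (hφ1 : ∀ x, φ (x + 1) = φ x + 1) (hφH : ∀ x, φ (H x) = φ x + α)
    (hψ1 : ∀ x, ψ (x + 1) = ψ x + 1) (hψH : ∀ x, ψ (H x) = ψ x + α) (x : ℝ) :
    ψ x - ψ 0 ≤ φ x - φ 0 := by
  by_contra! hlt
  obtain ⟨d, hd, h1, h2⟩ := (aux_dense hα).exists_between hlt
  obtain ⟨T, Ti, hT⟩ := aux_points hH hd
  have e1 := (hT φ hφ1 hφH 0).1
  have e2 := (hT ψ hψ1 hψH 0).1
  rcases le_total (T 0) x with h | h
  · have := hφ h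
    linarith
  · have := hψ h
    linarith

theorem aux_semiconj (H : CircleDeg1Lift) {Hi : ℝ → ℝ} (hH : SmoothLift H Hi)
    (hα : Irrational H.translationNumber) :
    ∃ φ : CircleDeg1Lift, Continuous φ ∧ ∀ x, φ (H x) = φ x + H.translationNumber := by
  have hbij : Bijective H := ⟨hH.mono.injective, fun y => ⟨Hi y, hH.right_inv y⟩⟩
  set α := H.translationNumber with hαd
  obtain ⟨φ, hφ⟩ := CircleDeg1Lift.semiconj_of_isUnit_of_translationNumber_eq
    (f₁ := H) (f₂ := (CircleDeg1Lift.translate (Multiplicative.ofAdd α) : CircleDeg1Liftˣ))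
    (CircleDeg1Lift.isUnit_iff_bijective.2 hbij) (Units.isUnit _)
    (by rw [CircleDeg1Lift.translationNumber_translate])
  have hφH : ∀ x, φ (H x) = φ x + α := by
    intro x
    have := hφ x
    rw [CircleDeg1Lift.translate_apply] at this
    rw [this, add_comm]
  refine ⟨φ, ?_, hφH⟩
  refine φ.monotone.continuous_of_denseRange ?_
  have h1 : Dense (Set.image (fun d => φ 0 + d) (AddSubgroup.closure ({α, 1} : Set ℝ) : Set ℝ)) :=
    (Homeomorph.addLeft (φ 0)).surjective.denseRange.dense_image
      (Homeomorph.addLeft (φ 0)).continuous (aux_dense hα)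
  refine h1.mono ?_
  rintro _ ⟨d, hd, rfl⟩
  obtain ⟨T, Ti, hT⟩ := aux_points hH hd
  exact ⟨T 0, (hT φ φ.map_add_one hφH 0).1⟩

theorem aux_centralizer {h g : UnitAddCircle ≃ₜ UnitAddCircle} (H : CircleDeg1Lift) {Hi : ℝ → ℝ}
    (hH : SmoothLift H Hi) (hHh : ∀ x : ℝ, ((H x : ℝ) : UnitAddCircle) = h x)
    (hα : Irrational H.translationNumber) (φ : CircleDeg1Lift)
    (hφH : ∀ x, φ (H x) = φ x + H.translationNumber)
    (hg : IsSmoothCircleDiffeo g) (hc : ∀ x, g (h x) = h (g x)) :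
    ∃ G Gi : ℝ → ℝ, ∃ c : ℝ, SmoothLift G Gi ∧ (∀ x : ℝ, ((G x : ℝ) : UnitAddCircle) = g x) ∧
      (∀ x, G (H x) = H (G x)) ∧ ∀ x, φ (G x) = φ x + c := by
  obtain ⟨G, Gi, hG, hGg⟩ := aux_exists_lift hg
  obtain ⟨k, hk⟩ := aux_int_const (f := fun x => G (H x) - H (G x))
    ((hG.smooth.continuous.comp hH.smooth.continuous).sub
      (hH.smooth.continuous.comp hG.smooth.continuous)) (fun x => by
      have : ((G (H x) : ℝ) : UnitAddCircle) = (H (G x) : ℝ) := by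
        rw [hGg, hHh, hHh, hGg, hc]
      obtain ⟨k, hk⟩ := aux_coe_eq.1 this
      exact ⟨k, by linarith⟩)
  let φG : CircleDeg1Lift := ⟨⟨fun x => φ (G x), fun x y hxy => φ.monotone (hG.mono.monotone hxy)⟩,
    fun x => by
      show φ (G (x + 1)) = φ (G x) + 1
      rw [hG.add_one, φ.map_add_one]⟩
  set α := H.translationNumber with hαd
  have hsem : Function.Semiconj φG H
      (CircleDeg1Lift.translate (Multiplicative.ofAdd (α + k)) : CircleDeg1Liftˣ) := by
    intro x
    rw [CircleDeg1Lift.translate_apply]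
    show φ (G (H x)) = α + k + φ (G x)
    have : G (H x) = H (G x) + k := by linarith [hk x]
    rw [this, φ.map_add_int, hφH]
    ring
  have hτ := CircleDeg1Lift.translationNumber_eq_of_semiconj hsem
  rw [CircleDeg1Lift.translationNumber_translate, ← hαd] at hτ
  have hk0 : (k : ℝ) = 0 := by linarith
  have hcomm : ∀ x, G (H x) = H (G x) := fun x => by linarith [hk x]
  have hφGH : ∀ x, φG (H x) = φG x + α := by
    intro x
    show φ (G (H x)) = φ (G x) + α
    rw [hcomm, hφH]
  refine ⟨G, Gi, φ (G 0) - φ 0, hG, hGg, hcomm, fun x => ?_⟩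
  have h1 := aux_unique hH hα φ.monotone φG.monotone φ.map_add_one hφH φG.map_add_one hφGH x
  have h2 := aux_unique hH hα φG.monotone φ.monotone φG.map_add_one hφGH φ.map_add_one hφH x
  have h3 : ∀ x, φG x = φ (G x) := fun _ => rfl
  rw [h3, h3] at h1 h2
  linarith

/-- The circle map induced by a degree-one map. -/
noncomputable def cmap (f : ℝ → ℝ) (hf : ∀ x, f (x + 1) = f x + 1) :
    UnitAddCircle → UnitAddCircle :=
  Function.Periodic.lift (f := fun x => ((f x : ℝ) : UnitAddCircle)) (c := 1) (fun x => by
    show ((f (x + 1) : ℝ) : UnitAddCircle) = (f x : ℝ)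
    rw [hf]
    exact AddCircle.coe_add_period 1 _)

theorem cmap_coe (f : ℝ → ℝ) (hf : ∀ x, f (x + 1) = f x + 1) (x : ℝ) :
    cmap f hf (x : UnitAddCircle) = (f x : ℝ) := rfl

theorem cmap_continuous (f : ℝ → ℝ) (hf : ∀ x, f (x + 1) = f x + 1) (hc : Continuous f) :
    Continuous (cmap f hf) := by
  have hq : IsQuotientMap (fun x : ℝ => (x : UnitAddCircle)) :=
    QuotientAddGroup.isQuotientMap_mk _
  rw [hq.continuous_iff]
  exact (AddCircle.continuous_mk' 1).comp hc

/-- The circle homeomorphism induced by a degree-one homeomorphism. -/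
noncomputable def chomeo (f fi : ℝ → ℝ) (hf : ∀ x, f (x + 1) = f x + 1)
    (hfi : ∀ x, fi (x + 1) = fi x + 1) (hc : Continuous f) (hci : Continuous fi)
    (h1 : ∀ x, fi (f x) = x) (h2 : ∀ x, f (fi x) = x) : UnitAddCircle ≃ₜ UnitAddCircle where
  toFun := cmap f hf
  invFun := cmap fi hfi
  left_inv := by
    intro x
    induction x using QuotientAddGroup.induction_on with
    | H x =>
      show ((fi (f x) : ℝ) : UnitAddCircle) = _
      rw [h1]
  right_inv := by
    intro x
    induction x using QuotientAddGroup.induction_on with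
    | H x =>
      show ((f (fi x) : ℝ) : UnitAddCircle) = _
      rw [h2]
  continuous_toFun := cmap_continuous f hf hc
  continuous_invFun := cmap_continuous fi hfi hci

end circle

/-- Let `h` be an orientation-preserving `C^∞` circle diffeomorphism with irrational
rotation number which is not `C^∞`-conjugate to a rotation. Then every continuous path (for the
uniform `C⁰` topology, expressed by joint continuity) in the `C^∞` centralizer `Z^∞(h)` is
constant. -/
theorem stmt_8 (h : UnitAddCircle ≃ₜ UnitAddCircle)
    (hsm : IsSmoothCircleDiffeo h)
    (hrot : ∃ H : CircleDeg1Lift,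
      (∀ x : ℝ, ((H x : ℝ) : UnitAddCircle) = h (x : UnitAddCircle)) ∧
        Irrational H.translationNumber)
    (hnl : ¬ ∃ φ : UnitAddCircle ≃ₜ UnitAddCircle, IsSmoothCircleDiffeo φ ∧
      ∃ β : ℝ, ∀ x, φ (h (φ.symm x)) = x + (β : UnitAddCircle))
    (γ : unitInterval → UnitAddCircle ≃ₜ UnitAddCircle)
    (hγZ : ∀ t, IsSmoothCircleDiffeo (γ t) ∧ ∀ x, (γ t) (h x) = h ((γ t) x))
    (hγc : Continuous fun p : unitInterval × UnitAddCircle => (γ p.1) p.2) :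
    ∀ t, γ t = γ 0 := by
  obtain ⟨H, hHh, hα⟩ := hrot
  obtain ⟨G0, G0i, hG0, hG0h⟩ := aux_exists_lift hsm
  obtain ⟨Hi, hH⟩ := aux_rot_lift hG0 hG0h H hHh
  obtain ⟨φ, hφc, hφH⟩ := aux_semiconj H hH hα
  set α := H.translationNumber with hαd
  have hex := fun t => aux_centralizer H hH hHh hα φ hφH (hγZ t).1 (hγZ t).2
  choose G Gi c hG hGγ hGcomm hφG using hex
  by_cases hcase : ∀ t, ((c t : ℝ) : UnitAddCircle) = (c 0 : ℝ)
  · -- the rotation number is constant along the path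
    intro t
    obtain ⟨k, hk⟩ := aux_coe_eq.1 (hcase t)
    have hQ := ((hG 0).symm.comp (hG t)).sub_int (-(k : ℝ))
    have hφ0i : ∀ x, φ (Gi 0 x) = φ x - c 0 := by
      intro x
      have := hφG 0 (Gi 0 x)
      rw [(hG 0).right_inv] at this
      linarith
    have h0i : ∀ x, Gi 0 (H x) = H (Gi 0 x) := by
      intro x
      apply (hG 0).mono.injective
      rw [(hG 0).right_inv, hGcomm, (hG 0).right_inv]
    have hid := aux_kopell hH hα φ.monotone hφc φ.map_add_one hφH hQ
      (fun x => by
        show Gi 0 (G t (H x)) + -(k : ℝ) = H (Gi 0 (G t x) + -(k : ℝ))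
        rw [hGcomm, h0i, ← sub_eq_add_neg, ← sub_eq_add_neg, H.map_sub_int])
      (fun x => by
        show φ (Gi 0 (G t x) + -(k : ℝ)) = φ x
        rw [← sub_eq_add_neg, φ.map_sub_int, hφ0i, hφG, hk]
        ring)
    ext x
    induction x using QuotientAddGroup.induction_on with
    | H x =>
      have h1 : Gi 0 (G t x) = x + k := by
        have : Gi 0 (G t x) + -(k : ℝ) = x := hid x
        linarith
      have h2 : G t x = G 0 x + k := by
        rw [← aux_deg_int (hG 0).add_one, ← h1, (hG 0).right_inv]
      have h3 : ((G t x : ℝ) : UnitAddCircle) = (G 0 x : ℝ) := aux_coe_eq.2 ⟨k, h2⟩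
      rw [hGγ, hGγ] at h3
      exact h3
  · exfalso
    push Not at hcase
    obtain ⟨t1, ht1⟩ := hcase
    -- all translations lift to smooth maps
    let A : AddSubgroup ℝ :=
      { carrier := {d | ∃ K Ki : ℝ → ℝ, SmoothLift K Ki ∧ ∀ x, φ (K x) = φ x + d}
        add_mem' := by
          rintro d e ⟨K, Ki, hK, hKd⟩ ⟨M, Mi, hM, hMe⟩
          refine ⟨_, _, hK.comp hM, fun x => ?_⟩
          rw [hKd, hMe]; ring
        zero_mem' := ⟨_, _, (hG 0).iterate 0, fun x => by simp⟩
        neg_mem' := by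
          rintro d ⟨K, Ki, hK, hKd⟩
          refine ⟨_, _, hK.symm, fun x => ?_⟩
          have := hKd (Ki x)
          rw [hK.right_inv] at this
          linarith }
    have hAc : ∀ t, c t ∈ A := fun t => ⟨G t, Gi t, hG t, hφG t⟩
    have hAint : ∀ k : ℤ, (k : ℝ) ∈ A := fun k =>
      ⟨_, _, ((hG 0).iterate 0).sub_int k, fun x => by simp⟩
    let N : unitInterval → ℝ := fun t => ‖((c t : ℝ) : UnitAddCircle) - (c 0 : ℝ)‖
    have hcc : Continuous fun t => ((c t : ℝ) : UnitAddCircle) := by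
      have e : (fun t => ((c t : ℝ) : UnitAddCircle)) =
          fun t => cmap φ φ.map_add_one (γ t ((0 : ℝ) : UnitAddCircle)) - ((φ 0 : ℝ) : UnitAddCircle) := by
        funext t
        rw [← hGγ, cmap_coe, hφG, AddCircle.coe_add, add_sub_cancel_left]
      rw [e]
      refine ((cmap_continuous _ _ hφc).comp ?_).sub continuous_const
      exact hγc.comp (continuous_id.prodMk continuous_const)
    have hNc : Continuous N := (hcc.sub continuous_const).norm
    have hN0 : N 0 = 0 := by simp [N]
    have hN1 : 0 < N t1 := norm_pos_iff.2 (sub_ne_zero.2 ht1)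
    have hsmall : ∀ s, 0 ≤ s → s ≤ N t1 → s ∈ A := by
      intro s hs0 hs1
      obtain ⟨t, ht⟩ := mem_range_of_exists_le_of_exists_ge hNc ⟨0, hN0.le.trans hs0⟩ ⟨t1, hs1⟩
      have h1 : |c t - c 0 - round (c t - c 0)| = s := by
        rw [← UnitAddCircle.norm_eq, AddCircle.coe_sub]
        exact ht
      have h2 : c t - c 0 - round (c t - c 0) ∈ A :=
        A.sub_mem (A.sub_mem (hAc t) (hAc 0)) (hAint _)
      rcases abs_choice (c t - c 0 - round (c t - c 0)) with h | h
      · rw [h] at h1; rwa [← h1]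
      · rw [h] at h1; rw [← h1]; exact A.neg_mem h2
    have hpos : ∀ y, 0 ≤ y → y ∈ A := by
      intro y hy
      obtain ⟨n, hn⟩ := exists_nat_gt (y / N t1)
      have hn0 : (0 : ℝ) < n := lt_of_le_of_lt (by positivity) hn
      have h1 : y / n ∈ A := by
        refine hsmall _ (by positivity) ?_
        rw [div_lt_iff₀ hN1] at hn
        rw [div_le_iff₀ hn0]
        linarith
      have h2 := A.nsmul_mem h1 n
      rwa [nsmul_eq_mul, mul_div_cancel₀ _ hn0.ne'] at h2
    have hall : ∀ y, y ∈ A := by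
      intro y
      rcases le_total 0 y with h | h
      · exact hpos y h
      · have := A.neg_mem (hpos (-y) (by linarith))
        rwa [neg_neg] at this
    choose K Ki hK hKd using hall
    have hinj : Injective φ := by
      have key : ∀ x y, x < y → φ x ≠ φ y := by
        intro x y hxy he
        have hcount : (univ : Set ℝ).Countable := by
          refine Set.PairwiseDisjoint.countable_of_isOpen (s := fun d => Ioo (K d x) (K d y)) ?_
            (fun d _ => isOpen_Ioo) (fun d _ => nonempty_Ioo.2 ((hK d).mono hxy))
          intro d _ e _ hde
          rw [Function.onFun, Set.disjoint_left]
          intro z hz hz'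
          apply hde
          have a1 := φ.monotone hz.1.le
          have a2 := φ.monotone hz.2.le
          have a3 := φ.monotone hz'.1.le
          have a4 := φ.monotone hz'.2.le
          rw [hKd] at a1 a2 a3 a4
          linarith
        exact Cardinal.not_countable_real hcount
      intro x y he
      rcases lt_trichotomy x y with h | h | h
      · exact absurd he (key x y h)
      · exact h
      · exact absurd he.symm (key y x h)
    have hsurj : Surjective φ := φ.continuous_iff_surjective.1 hφc
    have hstrict : StrictMono φ := φ.strictMono_iff_injective.2 hinj
    let e := hstrict.orderIsoOfSurjective φ hsurj
    have h1 : ∀ x, e.symm (φ x) = x := fun x => e.symm_apply_apply x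
    have h2 : ∀ x, φ (e.symm x) = x := fun x => e.apply_symm_apply x
    have hec : Continuous e.symm := e.symm.continuous
    have he1 : ∀ s, e.symm (s + 1) = e.symm s + 1 := by
      intro s
      apply hinj
      rw [h2, φ.map_add_one, h2]
    obtain ⟨hs1, hs2⟩ := aux_smooth h1 h2 hφc hec e.symm.monotone he1 (fun d => by
      have : (fun x => e.symm (φ x + d)) = K d := by
        funext x
        rw [← hKd, h1]
      rw [this]
      exact (hK d).smooth)
    apply hnl
    refine ⟨chomeo φ e.symm φ.map_add_one he1 hφc hec h1 h2,
      ⟨φ, e.symm, hs1, hs2, φ.map_add_one, he1, fun _ => rfl, fun _ => rfl⟩, α, fun x => ?_⟩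
    induction x using QuotientAddGroup.induction_on with
    | H x =>
      show cmap φ φ.map_add_one (h ((e.symm x : ℝ) : UnitAddCircle)) = (x : UnitAddCircle) + α
      rw [← hHh, cmap_coe, hφH, h2, AddCircle.coe_add]
end

section
/- An injective holomorphic map f: U → ℂ^q defined on an open set U ⊂ ℂ^q is a biholomorphism onto its image, i.e. f(U) is open and f⁻¹: f(U) → U is holomorphic. -/
open Filter Topology Set Metric

theorem osg_fderiv_apply {E F : Type*} [NormedAddCommGroup E] [NormedSpace ℂ E]
    [FiniteDimensional ℂ E] [NormedAddCommGroup F] [NormedSpace ℂ F] [FiniteDimensional ℂ F]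
    {U : Set E} (hU : IsOpen U) {f : E → F} (hf : DifferentiableOn ℂ f U) {x₀ : E} (hx₀ : x₀ ∈ U)
    (v : E) : DifferentiableAt ℂ (fun x => fderiv ℂ f x v) x₀ := by
  have := FiniteDimensional.complete ℂ E
  have := FiniteDimensional.complete ℂ F
  have := FiniteDimensional.proper ℂ E
  have hc : ContinuousAt f x₀ := (hf.differentiableAt (hU.mem_nhds hx₀)).continuousAt
  obtain ⟨R, hR, hRU⟩ : ∃ R > 0, ∀ x ∈ ball x₀ (3 * R), x ∈ U ∧ dist (f x) (f x₀) < 1 := by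
    have h1 : ∀ᶠ x in 𝓝 x₀, x ∈ U ∧ dist (f x) (f x₀) < 1 :=
      (hU.eventually_mem hx₀).and (hc.eventually (ball_mem_nhds _ one_pos))
    obtain ⟨R, hR, h⟩ := Metric.eventually_nhds_iff_ball.1 h1
    exact ⟨R / 3, by positivity, fun x hx => h x (by convert hx using 2; ring)⟩
  obtain ⟨ρ, hρ, hρv⟩ : ∃ ρ > 0, ρ * ‖v‖ < R := by
    refine ⟨R / (‖v‖ + 1), by positivity, ?_⟩
    rw [div_mul_eq_mul_div, div_lt_iff₀ (by positivity)]
    nlinarith [norm_nonneg v]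
  have hmem : ∀ x ∈ ball x₀ R, ∀ z : ℂ, ‖z‖ ≤ ρ → x + z • v ∈ ball x₀ (2 * R) := by
    intro x hx z hz
    rw [mem_ball, dist_eq_norm] at *
    calc ‖x + z • v - x₀‖ = ‖(x - x₀) + z • v‖ := by congr 1; abel
      _ ≤ ‖x - x₀‖ + ‖z‖ * ‖v‖ := by rw [← norm_smul]; exact norm_add_le _ _
      _ ≤ ‖x - x₀‖ + ρ * ‖v‖ := by gcongr
      _ < 2 * R := by linarith
  have hbound : ∀ y ∈ ball x₀ (2 * R), ‖fderiv ℂ f y‖ ≤ 2 / R := by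
    intro y hy
    have hsub : ∀ z ∈ ball y R, z ∈ ball x₀ (3 * R) := by
      intro z hz
      rw [mem_ball] at *
      linarith [dist_triangle z y x₀]
    refine Complex.norm_fderiv_le_div_of_mapsTo_ball
      (hf.mono fun z hz => (hRU z (hsub z hz)).1) ?_ hR
    intro z hz
    have h1 := (hRU z (hsub z hz)).2
    have h2 := (hRU y (hsub y (mem_ball_self hR))).2
    have := dist_triangle_right (f z) (f y) (f x₀)
    simp only [mem_closedBall]
    linarith
  have hdiff : ∀ y ∈ ball x₀ (2 * R), DifferentiableAt ℂ f y := fun y hy =>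
    hf.differentiableAt (hU.mem_nhds (hRU y (ball_subset_ball (by linarith) hy)).1)
  -- Cauchy formula
  have hcauchy : ∀ x ∈ ball x₀ R, fderiv ℂ f x v = (2 * Real.pi * Complex.I : ℂ)⁻¹ •
      ∮ z in C(0, ρ), ((z - 0) ^ 2)⁻¹ • f (x + z • v) := by
    intro x hx
    have hcont : Continuous fun z : ℂ => x + z • v := by fun_prop
    have hV : IsOpen ((fun z : ℂ => x + z • v) ⁻¹' ball x₀ (2 * R)) := isOpen_ball.preimage hcont
    rw [Complex.two_pi_I_inv_smul_circleIntegral_sub_sq_inv_smul_of_differentiable hV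
      (f := fun z => f (x + z • v))]
    · have h0 : HasFDerivAt f (fderiv ℂ f x) (x + (0 : ℂ) • v) := by
        simpa using (hdiff x (ball_subset_ball (by linarith) hx)).hasFDerivAt
      have h1 : HasDerivAt (fun z : ℂ => x + z • v) v 0 := by
        simpa using ((hasDerivAt_id (0 : ℂ)).smul_const v).const_add x
      exact (h0.comp_hasDerivAt 0 h1).deriv.symm
    · intro z hz
      exact hmem x hx z (by simpa using hz)
    · intro z hz
      have := hdiff _ hz
      exact (DifferentiableAt.comp (g := f) z this (by fun_prop)).differentiableWithinAt
    · simpa using hρ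
  have hcirc : ∀ θ : ℝ, ‖circleMap 0 ρ θ‖ ≤ ρ := by
    intro θ; simp [abs_of_pos hρ]
  have hinv : Continuous fun θ : ℝ => ((circleMap 0 ρ θ - 0) ^ 2)⁻¹ := by
    refine Continuous.inv₀ (by fun_prop) fun θ => ?_
    simp [hρ.ne']
  have hFcont : ∀ x ∈ ball x₀ R, Continuous fun θ : ℝ => deriv (circleMap 0 ρ) θ •
      ((circleMap 0 ρ θ - 0) ^ 2)⁻¹ • f (x + circleMap 0 ρ θ • v) := by
    intro x hx
    simp only [deriv_circleMap]
    refine Continuous.smul (by fun_prop) (hinv.smul ?_)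
    rw [continuous_iff_continuousAt]
    intro θ
    exact ContinuousAt.comp (g := f) (hdiff _ (hmem x hx _ (hcirc θ))).continuousAt
      (by fun_prop : Continuous fun θ : ℝ => x + circleMap 0 ρ θ • v).continuousAt
  have key := intervalIntegral.hasFDerivAt_integral_of_dominated_of_fderiv_le (𝕜 := ℂ)
    (μ := MeasureTheory.volume) (a := 0) (b := 2 * Real.pi) (x₀ := x₀) (s := ball x₀ R)
    (F := fun x θ => deriv (circleMap 0 ρ) θ • ((circleMap 0 ρ θ - 0) ^ 2)⁻¹ •
      f (x + circleMap 0 ρ θ • v))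
    (F' := fun x θ => deriv (circleMap 0 ρ) θ • ((circleMap 0 ρ θ - 0) ^ 2)⁻¹ •
      fderiv ℂ f (x + circleMap 0 ρ θ • v))
    (bound := fun _ => ρ * ((ρ ^ 2)⁻¹ * (2 / R))) (ball_mem_nhds _ hR) ?_ ?_ ?_ ?_ ?_ ?_
  · have h2 := key.differentiableAt.const_smul ((2 * Real.pi * Complex.I : ℂ)⁻¹)
    refine h2.congr_of_eventuallyEq ?_
    filter_upwards [ball_mem_nhds x₀ hR] with x hx
    exact hcauchy x hx
  · filter_upwards [ball_mem_nhds x₀ hR] with x hx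
    exact (hFcont x hx).aestronglyMeasurable
  · exact (hFcont x₀ (mem_ball_self hR)).intervalIntegrable _ _
  · borelize E
    borelize (E →L[ℂ] F)
    have h1 : Measurable fun θ : ℝ => fderiv ℂ f (x₀ + circleMap 0 ρ θ • v) :=
      (measurable_fderiv ℂ f).comp (by fun_prop : Continuous fun θ : ℝ =>
        x₀ + circleMap 0 ρ θ • v).measurable
    have : FiniteDimensional ℂ (E →L[ℂ] F) := inferInstance
    have := FiniteDimensional.proper ℂ (E →L[ℂ] F)
    have h2 : Continuous fun θ : ℝ => deriv (circleMap 0 ρ) θ := by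
      simp only [deriv_circleMap]
      fun_prop
    exact h2.aestronglyMeasurable.smul
      (hinv.aestronglyMeasurable.smul h1.stronglyMeasurable.aestronglyMeasurable)
  · refine MeasureTheory.ae_of_all _ fun θ _ x hx => ?_
    rw [norm_smul, norm_smul]
    have h1 := hbound _ (hmem x hx _ (hcirc θ))
    have h2 : ‖deriv (circleMap 0 ρ) θ‖ = ρ := by simp [abs_of_pos hρ]
    have h3 : ‖((circleMap 0 ρ θ - 0) ^ 2)⁻¹‖ = (ρ ^ 2)⁻¹ := by simp [abs_of_pos hρ]
    rw [h2, h3]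
    gcongr
  · exact intervalIntegrable_const
  · refine MeasureTheory.ae_of_all _ fun θ _ x hx => ?_
    have h1 := (hdiff _ (hmem x hx _ (hcirc θ))).hasFDerivAt
    have h2 : HasFDerivAt (fun x => f (x + circleMap 0 ρ θ • v))
        (fderiv ℂ f (x + circleMap 0 ρ θ • v)) x := (hasFDerivAt_comp_add_right _).2 h1
    exact (h2.const_smul _).const_smul _

theorem osg_differentiableOn_fderiv {E F : Type*} [NormedAddCommGroup E] [NormedSpace ℂ E]
    [FiniteDimensional ℂ E] [NormedAddCommGroup F] [NormedSpace ℂ F] [FiniteDimensional ℂ F]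
    {U : Set E} (hU : IsOpen U) {f : E → F} (hf : DifferentiableOn ℂ f U) :
    DifferentiableOn ℂ (fderiv ℂ f) U := by
  have := FiniteDimensional.complete ℂ E
  intro x hx
  let d := Module.finrank ℂ E
  have hd : d = Module.finrank ℂ (Fin d → ℂ) := (Module.finrank_fin_fun ℂ).symm
  let e₁ := ContinuousLinearEquiv.ofFinrankEq hd
  let e₂ := (e₁.arrowCongr (1 : F ≃L[ℂ] F)).trans (ContinuousLinearEquiv.piRing (Fin d))
  have : DifferentiableAt ℂ (e₂ ∘ fderiv ℂ f) x := by
    rw [differentiableAt_pi]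
    intro i
    exact osg_fderiv_apply hU hf hx _
  exact (e₂.comp_differentiableAt_iff.1 this).differentiableWithinAt

theorem osg_contDiffAt {E F : Type*} [NormedAddCommGroup E] [NormedSpace ℂ E]
    [FiniteDimensional ℂ E] [NormedAddCommGroup F] [NormedSpace ℂ F] [FiniteDimensional ℂ F]
    {U : Set E} (hU : IsOpen U) {f : E → F} (hf : DifferentiableOn ℂ f U) {x : E} (hx : x ∈ U) :
    ContDiffAt ℂ 1 f x := by
  have : ContDiffOn ℂ 1 f U := by
    rw [show (1 : WithTop ℕ∞) = 0 + 1 by simp, contDiffOn_succ_iff_fderiv_of_isOpen hU]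
    exact ⟨hf, by simp, contDiffOn_zero.2 (osg_differentiableOn_fderiv hU hf).continuousOn⟩
  exact this.contDiffAt (hU.mem_nhds hx)


/-- straightening -/
theorem osg_straighten {E : Type*} [NormedAddCommGroup E] [NormedSpace ℂ E]
    [FiniteDimensional ℂ E]
    {U : Set E} (hU : IsOpen U) {h : E → ℂ} (hh : DifferentiableOn ℂ h U) {p : E} (hp : p ∈ U)
    (v : E) :
    ∃ ψ : E → E, ψ p = p ∧ HasFDerivAt ψ (ContinuousLinearMap.id ℂ E) p ∧
      (∀ᶠ y in 𝓝 p, DifferentiableAt ℂ ψ y) ∧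
      (∀ᶠ y in 𝓝 p, ψ y + (h (ψ y) - h p - fderiv ℂ h p (ψ y - p)) • v = y) ∧
      (∀ᶠ x in 𝓝 p, ψ (x + (h x - h p - fderiv ℂ h p (x - p)) • v) = x) := by
  have := FiniteDimensional.complete ℂ E
  have hc : ContDiffAt ℂ 1 h p := osg_contDiffAt hU hh hp
  set l := fderiv ℂ h p with hl
  let Φ : E → E := fun x => x + (h x - h p - l (x - p)) • v
  have hΦ : ContDiffAt ℂ 1 Φ p := by
    have : ContDiffAt ℂ 1 (fun x => l (x - p)) p := l.contDiff.contDiffAt.comp p (by fun_prop)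
    fun_prop
  have hΦp : Φ p = p := by simp [Φ]
  have hd : HasFDerivAt Φ (ContinuousLinearEquiv.refl ℂ E : E →L[ℂ] E) p := by
    have h1 : HasFDerivAt h l p :=
      (hh.differentiableAt (hU.mem_nhds hp)).hasFDerivAt
    have h2 : HasFDerivAt (fun x => l (x - p)) l p :=
      l.hasFDerivAt.comp p ((hasFDerivAt_id p).sub_const p)
    have h3 := (hasFDerivAt_id p).add (((h1.sub_const (h p)).sub h2).smul_const v)
    have e : ContinuousLinearMap.id ℂ E + (l - l).smulRight v =
        (ContinuousLinearEquiv.refl ℂ E : E →L[ℂ] E) := by ext x; simp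
    rw [e] at h3
    exact h3
  refine ⟨hΦ.localInverse hd one_ne_zero, ?_, ?_, ?_, ?_, ?_⟩
  · have := hΦ.localInverse_apply_image hd one_ne_zero
    rwa [hΦp] at this
  · have := (hΦ.hasStrictFDerivAt' hd one_ne_zero).to_localInverse.hasFDerivAt
    rw [hΦp] at this
    exact this
  · have := hΦ.to_localInverse hd one_ne_zero
    rw [hΦp] at this
    filter_upwards [this.eventually (by simp)] with y hy
    exact hy.differentiableAt one_ne_zero
  · have := (hΦ.hasStrictFDerivAt' hd one_ne_zero).eventually_right_inverse
    rw [hΦp] at this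
    exact this
  · exact (hΦ.hasStrictFDerivAt' hd one_ne_zero).eventually_left_inverse

/-- Hurwitz-type persistence of zeros. -/
theorem osg_hurwitz {G : ℂ → ℂ → ℂ} {ρ : ℝ} (hρ : 0 < ρ)
    (hd : ∀ t ∈ ball (0 : ℂ) ρ, DifferentiableOn ℂ (fun s => G s t) (ball 0 ρ))
    (hc : ContinuousOn (fun z : ℂ × ℂ => G z.1 z.2) (ball 0 ρ ×ˢ ball 0 ρ))
    (h0 : G 0 0 = 0) (hne : ¬ ∀ᶠ s in 𝓝 0, G s 0 = 0) {ε : ℝ} (hε : 0 < ε) :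
    ∀ᶠ t in 𝓝 (0 : ℂ), ∃ s, ‖s‖ < ε ∧ G s t = 0 := by
  have hρ0 : (0 : ℂ) ∈ ball (0 : ℂ) ρ := mem_ball_self hρ
  have ha : AnalyticAt ℂ (fun s => G s 0) 0 := (hd 0 hρ0).analyticAt (isOpen_ball.mem_nhds hρ0)
  have hiso := ha.eventually_eq_zero_or_eventually_ne_zero.resolve_left hne
  obtain ⟨r₀, hr₀, hr⟩ := Metric.eventually_nhds_iff_ball.1 (eventually_nhdsWithin_iff.1 hiso)
  obtain ⟨r, hrpos, hrlt⟩ := exists_between (lt_min (lt_min hr₀ hε) hρ)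
  simp only [lt_min_iff] at hrlt
  have hrρ : closedBall (0 : ℂ) r ⊆ ball 0 ρ := closedBall_subset_ball hrlt.2
  have hsph : ∀ s ∈ sphere (0 : ℂ) r, G s 0 ≠ 0 := by
    intro s hs
    refine hr s ?_ ?_
    · rw [mem_sphere] at hs
      rw [mem_ball]; linarith [hrlt.1.1]
    · rintro rfl
      simp at hs
      linarith
  have hc0 : ContinuousOn (fun s => G s 0) (sphere 0 r) :=
    ((hd 0 hρ0).continuousOn).mono (sphere_subset_closedBall.trans hrρ)
  obtain ⟨s₀, hs₀, hmin⟩ := (isCompact_sphere (0 : ℂ) r).exists_isMinOn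
    (NormedSpace.sphere_nonempty.2 hrpos.le) hc0.norm
  set δ := ‖G s₀ 0‖ with hδ
  have hδpos : 0 < δ := norm_pos_iff.2 (hsph s₀ hs₀)
  have hev : ∀ᶠ t in 𝓝 (0 : ℂ), ∀ s ∈ sphere (0 : ℂ) r, δ / 2 < ‖G s t‖ := by
    refine (isCompact_sphere (0 : ℂ) r).eventually_forall_of_forall_eventually ?_
    intro s hs
    have h1 : ContinuousAt (fun z : ℂ × ℂ => ‖G z.1 z.2‖) (s, 0) :=
      (hc.continuousAt ((isOpen_ball.prod isOpen_ball).mem_nhds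
        ⟨hrρ (sphere_subset_closedBall hs), hρ0⟩)).norm
    have h2 : δ ≤ ‖G s 0‖ := hmin hs
    have h3 : δ / 2 < ‖G s 0‖ := by linarith
    exact (continuous_swap.tendsto ((0 : ℂ), s)).eventually (h1.eventually (lt_mem_nhds h3))
  have hev0 : ∀ᶠ t in 𝓝 (0 : ℂ), ‖G 0 t‖ < δ / 2 := by
    have h1 : ContinuousAt (fun z : ℂ × ℂ => ‖G z.1 z.2‖) (0, 0) :=
      (hc.continuousAt ((isOpen_ball.prod isOpen_ball).mem_nhds ⟨hρ0, hρ0⟩)).norm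
    have h2 : ContinuousAt (fun t : ℂ => ((0 : ℂ), t)) 0 := by fun_prop
    have h3 := ContinuousAt.comp (f := fun t : ℂ => ((0 : ℂ), t)) h1 h2
    refine h3.eventually (gt_mem_nhds ?_)
    simp [h0, hδpos]
  filter_upwards [hev, hev0, isOpen_ball.eventually_mem hρ0] with t h1 h2 ht
  by_contra hcon
  push Not at hcon
  have hnz : ∀ s ∈ closedBall (0 : ℂ) r, G s t ≠ 0 := fun s hs =>
    hcon s (by simp at hs; linarith [hrlt.1.2])
  have hdc : DiffContOnCl ℂ (fun s => (G s t)⁻¹) (ball 0 r) := by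
    refine DifferentiableOn.diffContOnCl ?_
    rw [closure_ball _ hrpos.ne']
    exact ((hd t ht).mono hrρ).inv hnz
  have h4 := Complex.norm_le_of_forall_mem_frontier_norm_le isBounded_ball hdc (C := (δ / 2)⁻¹)
    (fun s hs => by
      rw [frontier_ball _ hrpos.ne'] at hs
      rw [norm_inv]
      exact inv_anti₀ (by positivity) (h1 s hs).le) (z := 0) (subset_closure (mem_ball_self hrpos))
  rw [norm_inv, inv_le_inv₀ (norm_pos_iff.2 (hnz 0 (by simp [hrpos.le]))) (by positivity)] at h4
  linarith

/-- one variable -/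
theorem osg_one_dim {f : ℂ → ℂ} {U : Set ℂ} (hU : IsOpen U) (hf : DifferentiableOn ℂ f U)
    (hinj : InjOn f U) {p : ℂ} (hp : p ∈ U) : deriv f p ≠ 0 := by
  intro hd
  have ha : AnalyticAt ℂ f p := hf.analyticAt (hU.mem_nhds hp)
  have hb : AnalyticAt ℂ (fun z => f z - f p) p := ha.sub analyticAt_const
  have hne : ¬ ∀ᶠ z in 𝓝 p, f z - f p = 0 := by
    intro h
    have h2 : ∀ᶠ z in 𝓝[≠] p, z ∈ U ∧ f z - f p = 0 ∧ z ≠ p := by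
      filter_upwards [h.filter_mono nhdsWithin_le_nhds,
        (hU.eventually_mem hp).filter_mono nhdsWithin_le_nhds, self_mem_nhdsWithin] with z h1 h2 h3
      exact ⟨h2, h1, h3⟩
    obtain ⟨z, hz, h1, h3⟩ := h2.exists
    exact h3 (hinj hz hp (sub_eq_zero.1 h1))
  obtain ⟨k, g, hg, hg0, hfg⟩ := hb.exists_eventuallyEq_pow_smul_nonzero_iff.2 hne
  simp only [smul_eq_mul] at hfg
  have hk : 2 ≤ k := by
    by_contra hk
    have : k = 0 ∨ k = 1 := by omega
    rcases this with rfl | rfl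
    · have := hfg.self_of_nhds
      simp at this
      exact hg0 this.symm
    · have h1 : HasDerivAt (fun z => (z - p) ^ 1 * g z) (g p) p := by
        have := ((hasDerivAt_id p).sub_const p).mul hg.differentiableAt.hasDerivAt
        simp only [id, sub_self, zero_mul, one_mul, add_zero] at this
        simp only [pow_one]
        exact this
      have h2 := (h1.congr_of_eventuallyEq hfg).deriv
      rw [deriv_sub_const, hd] at h2
      exact hg0 h2.symm
  have hk0 : k ≠ 0 := by omega
  have hkC : (k : ℂ) ≠ 0 := by exact_mod_cast hk0
  obtain ⟨c, hc⟩ := IsAlgClosed.exists_pow_nat_eq (g p) (Nat.pos_of_ne_zero hk0)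
  have hc0 : c ≠ 0 := by rintro rfl; rw [zero_pow hk0] at hc; exact hg0 hc.symm
  let q : ℂ → ℂ := fun z => c * Complex.exp (Complex.log (g z / g p) / k)
  have hq : AnalyticAt ℂ q p := by
    have : AnalyticAt ℂ (fun z => Complex.log (g z / g p)) p :=
      (hg.div analyticAt_const hg0).clog (by simp [div_self hg0])
    have h2 : AnalyticAt ℂ (fun z => Complex.log (g z / g p) / k) p :=
      this.div analyticAt_const hkC
    exact analyticAt_const.mul h2.cexp
  have hqp : q p = c := by simp [q, div_self hg0]
  have hqk : ∀ᶠ z in 𝓝 p, q z ^ k = g z := by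
    filter_upwards [hg.continuousAt.eventually_ne hg0] with z hz
    simp only [q]
    rw [mul_pow, hc, ← Complex.exp_nat_mul, mul_div_cancel₀ _ hkC, Complex.exp_log (by positivity)]
    field_simp
  let u : ℂ → ℂ := fun z => (z - p) * q z
  have hu : AnalyticAt ℂ u p := (analyticAt_id.sub analyticAt_const).mul hq
  have hup : u p = 0 := by simp [u]
  have hu' : HasStrictDerivAt u c p := by
    have h1 : HasDerivAt u c p := by
      have := ((hasDerivAt_id p).sub_const p).mul hq.differentiableAt.hasDerivAt
      simp only [id, sub_self, zero_mul, one_mul, add_zero, hqp] at this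
      exact this
    have := hu.hasStrictDerivAt
    rwa [h1.deriv] at this
  have hmap := hu'.map_nhds_eq hc0
  rw [hup] at hmap
  have hfu : ∀ᶠ z in 𝓝 p, z ∈ U ∧ f z = f p + u z ^ k := by
    filter_upwards [hU.eventually_mem hp, hfg, hqk] with z h1 h2 h3
    refine ⟨h1, ?_⟩
    rw [mul_pow, h3, ← h2]; ring
  have himg : ∀ᶠ w in 𝓝 (0 : ℂ), ∃ z, z ∈ U ∧ f z = f p + w ^ k ∧ u z = w := by
    rw [← hmap, eventually_map]
    filter_upwards [hfu] with z hz
    exact ⟨z, hz.1, hz.2, rfl⟩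
  obtain ⟨ζ, hζ⟩ : ∃ ζ : ℂ, IsPrimitiveRoot ζ k := ⟨_, Complex.isPrimitiveRoot_exp k hk0⟩
  have hζ1 : ζ ≠ 1 := hζ.ne_one (by omega)
  have himg2 : ∀ᶠ w in 𝓝 (0 : ℂ), ∃ z, z ∈ U ∧ f z = f p + (ζ * w) ^ k ∧ u z = ζ * w := by
    have h1 : Tendsto (fun w : ℂ => ζ * w) (𝓝 0) (𝓝 0) := by
      have : Continuous (fun w : ℂ => ζ * w) := by fun_prop
      simpa using this.tendsto 0
    exact h1.eventually himg
  have hall : ∀ᶠ w in 𝓝[≠] (0 : ℂ), (∃ z, z ∈ U ∧ f z = f p + w ^ k ∧ u z = w) ∧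
      (∃ z, z ∈ U ∧ f z = f p + (ζ * w) ^ k ∧ u z = ζ * w) ∧ w ≠ 0 := by
    filter_upwards [himg.filter_mono nhdsWithin_le_nhds, himg2.filter_mono nhdsWithin_le_nhds,
      self_mem_nhdsWithin] with w h1 h2 h3
    exact ⟨h1, h2, h3⟩
  obtain ⟨w, ⟨z₁, hz₁, hf₁, hu₁⟩, ⟨z₂, hz₂, hf₂, hu₂⟩, hw⟩ := hall.exists
  rw [mul_pow, hζ.pow_eq_one, one_mul] at hf₂
  have := hinj hz₁ hz₂ (hf₁.trans hf₂.symm)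
  rw [← this, hu₁] at hu₂
  exact hζ1 (mul_right_cancel₀ hw (by rw [one_mul]; exact hu₂.symm))


/-- Restriction to complex lines: identity principle. -/
theorem osg_line_identity {E : Type*} [NormedAddCommGroup E] [NormedSpace ℂ E]
    {J : E → ℂ} {p : E} {r : ℝ} (hJ : DifferentiableOn ℂ J (ball p r)) {x : E}
    (hx : x ∈ ball p r) (h0 : ∀ᶠ s in 𝓝 (0 : ℂ), J (p + s • (x - p)) = 0) : J x = 0 := by
  let L : ℂ → E := fun s => p + s • (x - p)
  have hL : Continuous L := by fun_prop
  let V : Set ℂ := L ⁻¹' ball p r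
  have hV : IsOpen V := isOpen_ball.preimage hL
  have hVc : Convex ℝ V := by
    intro a ha b hb s t hs ht hst
    have h1 := (convex_ball p r) ha hb hs ht hst
    have h2 : L (s • a + t • b) = s • L a + t • L b := by
      have h3 : (s : ℝ) • p + t • p = p := by rw [← add_smul, hst, one_smul]
      calc L (s • a + t • b) = p + (s • a + t • b) • (x - p) := rfl
        _ = (s • p + t • p) + (s • a + t • b) • (x - p) := by rw [h3]
        _ = s • L a + t • L b := by
          simp only [L, smul_add, add_smul, smul_assoc]
          abel
    change L _ ∈ ball p r
    rw [h2]; exact h1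
  have hr : 0 < r := pos_of_mem_ball hx
  have h0V : (0 : ℂ) ∈ V := by simp [V, L, hr]
  have h1V : (1 : ℂ) ∈ V := by simpa [V, L] using hx
  have hd : DifferentiableOn ℂ (J ∘ L) V := by
    intro s hs
    have h1 : DifferentiableAt ℂ J (L s) := hJ.differentiableAt (isOpen_ball.mem_nhds hs)
    have h2 : DifferentiableAt ℂ L s := by fun_prop
    exact (h1.comp s h2).differentiableWithinAt
  have := (hd.analyticOnNhd hV).eqOn_zero_of_preconnected_of_eventuallyEq_zero
    hVc.isPreconnected h0V h0 h1V
  simpa [L] using this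

theorem osg_exists_transversal {E : Type*} [NormedAddCommGroup E] [NormedSpace ℂ E]
    [FiniteDimensional ℂ E] {U : Set E} (hU : IsOpen U) {J : E → ℂ} (hJ : DifferentiableOn ℂ J U)
    {p : E} (hp : p ∈ U) (hJp : J p = 0) (hne : ¬ ∀ᶠ x in 𝓝 p, J x = 0) :
    ∃ h : E → ℂ, DifferentiableOn ℂ h U ∧ (∀ x ∈ U, J x = 0 → h x = 0) ∧
      ∃ p' ∈ U, J p' = 0 ∧ fderiv ℂ h p' ≠ 0 := by
  by_contra hcon
  push Not at hcon
  apply hne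
  obtain ⟨r, hr, hrU⟩ := Metric.isOpen_iff.1 hU p hp
  filter_upwards [ball_mem_nhds p hr] with x hx
  refine osg_line_identity (hJ.mono hrU) hx ?_
  set v := x - p with hv
  let D : (E → ℂ) → (E → ℂ) := fun h y => fderiv ℂ h y v
  have hD : ∀ k : ℕ, DifferentiableOn ℂ (D^[k] J) U ∧ ∀ y ∈ U, J y = 0 → (D^[k] J) y = 0 := by
    intro k
    induction k with
    | zero => exact ⟨hJ, fun y _ h => h⟩
    | succ k ih =>
      rw [Function.iterate_succ_apply']
      refine ⟨fun y hy => (osg_fderiv_apply hU ih.1 hy v).differentiableWithinAt, ?_⟩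
      intro y hy hJy
      simp only [D]
      rw [hcon _ ih.1 ih.2 y hy hJy]; rfl
  let L : ℂ → E := fun s => p + s • v
  have hL : Continuous L := by fun_prop
  let V : Set ℂ := L ⁻¹' U
  have hV : IsOpen V := hU.preimage hL
  have h0V : (0 : ℂ) ∈ V := by simp [V, L, hp]
  have hit : ∀ k : ℕ, ∀ s ∈ V, iteratedDeriv k (fun s => J (L s)) s = (D^[k] J) (L s) := by
    intro k
    induction k with
    | zero => intro s _; simp
    | succ k ih =>
      intro s hs
      rw [iteratedDeriv_succ, Function.iterate_succ_apply']
      have h1 : iteratedDeriv k (fun s => J (L s)) =ᶠ[𝓝 s] fun s => (D^[k] J) (L s) := by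
        filter_upwards [hV.mem_nhds hs] with t ht using ih t ht
      rw [h1.deriv_eq]
      have h2 : HasFDerivAt (D^[k] J) (fderiv ℂ (D^[k] J) (L s)) (L s) :=
        ((hD k).1.differentiableAt (hU.mem_nhds hs)).hasFDerivAt
      have h3 : HasDerivAt L v s := by
        have h := ((hasDerivAt_id s).smul_const v).const_add p
        rw [one_smul] at h
        exact h
      exact (h2.comp_hasDerivAt s h3).deriv
  have hd : DifferentiableOn ℂ (fun s => J (L s)) V := by
    intro s hs
    have h1 : DifferentiableAt ℂ J (L s) := hJ.differentiableAt (hU.mem_nhds hs)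
    have h2 : DifferentiableAt ℂ L s := by fun_prop
    exact (DifferentiableAt.comp s h1 h2).differentiableWithinAt
  have ha : AnalyticAt ℂ (fun s => J (L s)) 0 := hd.analyticAt (hV.mem_nhds h0V)
  have htop : analyticOrderAt (fun s => J (L s)) 0 = ⊤ := by
    rw [ENat.eq_top_iff_forall_ge]
    intro n
    rw [natCast_le_analyticOrderAt_iff_iteratedDeriv_eq_zero ha]
    intro i _
    rw [hit i 0 h0V]
    exact (hD i).2 _ h0V (by simpa [L] using hJp)
  exact analyticOrderAt_eq_top.1 htop

theorem osg_no_curve {E F : Type*} [NormedAddCommGroup E] [NormedSpace ℂ E]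
    [NormedAddCommGroup F] [NormedSpace ℂ F]
    {U : Set E} (hU : IsOpen U) {f : E → F} (hf : DifferentiableOn ℂ f U) (hinj : InjOn f U)
    {γ : ℂ → E} {w : E} (hw : w ≠ 0) (hγ : HasDerivAt γ w 0)
    (hγd : ∀ᶠ t in 𝓝 (0 : ℂ), DifferentiableAt ℂ γ t)
    (hz : ∀ᶠ t in 𝓝 (0 : ℂ), γ t ∈ U ∧ fderiv ℂ f (γ t) = 0) : False := by
  obtain ⟨ε, hε, h⟩ := Metric.eventually_nhds_iff_ball.1 (hγd.and hz)
  have hd : ∀ t ∈ ball (0 : ℂ) ε, HasDerivAt (fun t => f (γ t)) 0 t := by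
    intro t ht
    obtain ⟨h1, h2, h3⟩ := h t ht
    have h4 := (hf.differentiableAt (hU.mem_nhds h2)).hasFDerivAt.comp_hasDerivAt t h1.hasDerivAt
    rw [h3] at h4
    exact h4
  have h0 := mem_ball_self (x := (0 : ℂ)) hε
  have hconst : ∀ t ∈ ball (0 : ℂ) ε, γ t = γ 0 := by
    intro t ht
    refine hinj (h t ht).2.1 (h 0 h0).2.1 ?_
    exact isOpen_ball.is_const_of_deriv_eq_zero (convex_ball (0 : ℂ) ε).isPreconnected
      (fun t ht => (hd t ht).differentiableAt.differentiableWithinAt)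
      (fun t ht => (hd t ht).deriv) ht h0
  have : HasDerivAt γ 0 0 := by
    refine (hasDerivAt_const (0 : ℂ) (γ 0)).congr_of_eventuallyEq ?_
    filter_upwards [ball_mem_nhds (0 : ℂ) hε] with t ht using hconst t ht
  exact hw (hγ.unique this)

theorem osg_differentiableOn_prod {E ι : Type*} [NormedAddCommGroup E] [NormedSpace ℂ E]
    {U : Set E} (u : Finset ι) {g : ι → E → ℂ} (hg : ∀ i, DifferentiableOn ℂ (g i) U) :
    DifferentiableOn ℂ (fun x => ∏ i ∈ u, g i x) U := by
  classical
  induction u using Finset.induction_on with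
  | empty => simp
  | insert a u ha ih =>
    simp only [Finset.prod_insert ha]
    exact (hg a).mul ih

theorem osg_jacobian {E F : Type*} [NormedAddCommGroup E] [NormedSpace ℂ E]
    [FiniteDimensional ℂ E] [NormedAddCommGroup F] [NormedSpace ℂ F] [FiniteDimensional ℂ F]
    (hEF : Module.finrank ℂ F = Module.finrank ℂ E)
    {U : Set E} (hU : IsOpen U) {f : E → F} (hf : DifferentiableOn ℂ f U) :
    ∃ J : E → ℂ, DifferentiableOn ℂ J U ∧
      ∀ x, J x = 0 ↔ ¬ Function.Injective (fderiv ℂ f x) := by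
  let e : F ≃ₗ[ℂ] E := LinearEquiv.ofFinrankEq F E hEF
  let b := Module.finBasis ℂ E
  refine ⟨fun x => LinearMap.det ((e : F →ₗ[ℂ] E) ∘ₗ (fderiv ℂ f x : E →ₗ[ℂ] F)), ?_, ?_⟩
  · have h1 : ∀ i j, DifferentiableOn ℂ (fun x => b.repr (e (fderiv ℂ f x (b j))) i) U := by
      intro i j x hx
      have h2 := osg_fderiv_apply hU hf hx (b j)
      let M : F →L[ℂ] ℂ := LinearMap.toContinuousLinearMap (b.coord i ∘ₗ (e : F →ₗ[ℂ] E))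
      exact (M.differentiableAt.comp x h2).differentiableWithinAt
    simp_rw [← LinearMap.det_toMatrix b, Matrix.det_apply, LinearMap.toMatrix_apply]
    refine DifferentiableOn.fun_sum fun σ _ => DifferentiableOn.const_smul ?_ _
    exact osg_differentiableOn_prod _ fun i => h1 _ _
  · intro x
    rw [← not_iff_not, not_not]
    change LinearMap.det ((e : F →ₗ[ℂ] E) ∘ₗ (fderiv ℂ f x : E →ₗ[ℂ] F)) ≠ 0 ↔ _
    rw [← isUnit_iff_ne_zero, ← LinearMap.isUnit_iff_isUnit_det, LinearMap.isUnit_iff_ker_eq_bot,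
      LinearMap.ker_eq_bot]
    simp


theorem osg_critical {E F : Type*} [NormedAddCommGroup E] [NormedSpace ℂ E]
    [FiniteDimensional ℂ E] [NormedAddCommGroup F] [NormedSpace ℂ F] [FiniteDimensional ℂ F]
    (hEF : Module.finrank ℂ F = Module.finrank ℂ E) (hdim : 2 ≤ Module.finrank ℂ E)
    {U : Set E} (hU : IsOpen U) {f : E → F} (hf : DifferentiableOn ℂ f U) (hinj : InjOn f U)
    (hz : ∀ x ∈ U, ¬ Function.Injective (fderiv ℂ f x) → fderiv ℂ f x = 0) {p₀ : E}
    (hp₀ : p₀ ∈ U) : Function.Injective (fderiv ℂ f p₀) := by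
  by_contra hcon
  obtain ⟨J, hJ, hJiff⟩ := osg_jacobian hEF hU hf
  have hJ0 : ∀ x ∈ U, J x = 0 → fderiv ℂ f x = 0 := fun x hx h => hz x hx ((hJiff x).1 h)
  have hlin : ∀ p w : E, HasDerivAt (fun t : ℂ => p + t • w) w 0 := by
    intro p w
    have h := ((hasDerivAt_id (0 : ℂ)).smul_const w).const_add p
    rw [one_smul] at h
    exact h
  have hE : Nontrivial E := Module.nontrivial_of_finrank_pos (R := ℂ) (by omega)
  have hnl : ∀ x ∈ U, ¬ ∀ᶠ y in 𝓝 x, J y = 0 := by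
    intro x hx hev
    obtain ⟨w, hw⟩ := exists_ne (0 : E)
    have hc : Tendsto (fun t : ℂ => x + t • w) (𝓝 0) (𝓝 x) := by
      have : Continuous fun t : ℂ => x + t • w := by fun_prop
      simpa using this.tendsto 0
    refine osg_no_curve hU hf hinj hw (hlin x w) (Eventually.of_forall fun t => by fun_prop) ?_
    filter_upwards [hc.eventually hev, hc.eventually (hU.eventually_mem hx)] with t h1 h2
    exact ⟨h2, hJ0 _ h2 h1⟩
  obtain ⟨h, hh, hhJ, p, hp, hJp, hhp⟩ :=
    osg_exists_transversal hU hJ hp₀ ((hJiff p₀).2 hcon) (hnl p₀ hp₀)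
  set l := fderiv ℂ h p with hl
  obtain ⟨e, he⟩ : ∃ e, l e ≠ 0 := by
    by_contra hc
    push Not at hc
    exact hhp (by ext x; simp [hc x])
  obtain ⟨r, hr, hrU⟩ := Metric.isOpen_iff.1 hU p hp
  -- a direction transversal to `h = 0` along which `J` does not vanish identically
  obtain ⟨x, hxr, hJx, hlx⟩ : ∃ x ∈ ball p r, J x ≠ 0 ∧ l (x - p) ≠ 0 := by
    have h1 : ∃ᶠ y in 𝓝 p, J y ≠ 0 := by
      have := hnl p hp
      rwa [Filter.not_eventually] at this
    obtain ⟨x₁, hJ₁, hx₁⟩ := (h1.and_eventually (ball_mem_nhds p hr)).exists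
    by_cases hl₁ : l (x₁ - p) = 0
    · have hc : Tendsto (fun t : ℂ => x₁ + t • e) (𝓝 0) (𝓝 x₁) := by
        have : Continuous fun t : ℂ => x₁ + t • e := by fun_prop
        simpa using this.tendsto 0
      have hJc : ContinuousAt J x₁ := (hJ.differentiableAt (hU.mem_nhds (hrU hx₁))).continuousAt
      have h2 : ∀ᶠ t in 𝓝[≠] (0 : ℂ), x₁ + t • e ∈ ball p r ∧ J (x₁ + t • e) ≠ 0 ∧ t ≠ 0 := by
        filter_upwards [(hc.eventually (isOpen_ball.eventually_mem hx₁)).filter_mono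
          nhdsWithin_le_nhds, (hc.eventually (hJc.eventually_ne hJ₁)).filter_mono
          nhdsWithin_le_nhds, self_mem_nhdsWithin] with t h1 h2 h3
        exact ⟨h1, h2, h3⟩
      obtain ⟨t, ht1, ht2, ht3⟩ := h2.exists
      refine ⟨_, ht1, ht2, ?_⟩
      rw [show x₁ + t • e - p = (x₁ - p) + t • e by abel, map_add, hl₁, map_smul, zero_add,
        smul_eq_mul]
      exact mul_ne_zero ht3 he
    · exact ⟨x₁, hx₁, hJ₁, hl₁⟩
  set v : E := (l (x - p))⁻¹ • (x - p) with hv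
  have hlv : l v = 1 := by
    rw [hv, map_smul, smul_eq_mul, inv_mul_cancel₀ hlx]
  have hJv : ¬ ∀ᶠ s in 𝓝 (0 : ℂ), J (p + s • v) = 0 := by
    intro hev
    apply hJx
    refine osg_line_identity (hJ.mono hrU) hxr ?_
    have hc : Tendsto (fun s : ℂ => s * l (x - p)) (𝓝 0) (𝓝 0) := by
      have : Continuous fun s : ℂ => s * l (x - p) := by fun_prop
      simpa using this.tendsto 0
    filter_upwards [hc.eventually hev] with s hs
    rwa [hv, smul_smul, mul_assoc, mul_inv_cancel₀ hlx, mul_one] at hs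
  obtain ⟨w, hwl, hw⟩ : ∃ w : E, l w = 0 ∧ w ≠ 0 := by
    have h1 : LinearMap.ker (l : E →ₗ[ℂ] ℂ) ≠ ⊥ :=
      LinearMap.ker_ne_bot_of_finrank_lt (by rw [Module.finrank_self]; omega)
    obtain ⟨w, hw, hw0⟩ := Submodule.exists_mem_ne_zero_of_ne_bot h1
    exact ⟨w, hw, hw0⟩
  obtain ⟨ψ, hψp, hψ', hψd, -, hψl⟩ := osg_straighten hU hh hp v
  rw [← hl] at hψl
  let P : ℂ × ℂ → E := fun z => p + z.1 • v + z.2 • w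
  have hP : Continuous P := by fun_prop
  have hP0 : Tendsto P (𝓝 (0, 0)) (𝓝 p) := by simpa [P] using hP.tendsto (0, 0)
  obtain ⟨ρ, hρ, hρP⟩ := Metric.eventually_nhds_iff_ball.1
    (hP0.eventually (hψl.and (hU.eventually_mem hp)))
  rw [← ball_prod_same] at hρP
  have hJP : ∀ z ∈ ball (0 : ℂ) ρ ×ˢ ball (0 : ℂ) ρ, DifferentiableAt ℂ J (P z) := fun z hz =>
    hJ.differentiableAt (hU.mem_nhds (hρP z hz).2)
  have hhur := osg_hurwitz (G := fun s t => J (P (s, t))) hρ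
    (by
      intro t ht s hs
      have h1 := hJP (s, t) ⟨hs, ht⟩
      have h2 : DifferentiableAt ℂ (fun s => P (s, t)) s := by
        simp only [P]; fun_prop
      exact (DifferentiableAt.comp s h1 h2).differentiableWithinAt)
    (by
      intro z hz
      exact ((hJP z hz).continuousAt.comp hP.continuousAt).continuousWithinAt)
    (by simpa [P] using hJp) (by simpa [P] using hJv) hρ
  have hhp0 : h p = 0 := hhJ p hp hJp
  refine osg_no_curve hU hf hinj (γ := fun t => ψ (p + t • w)) hw ?_ ?_ ?_
  · have h1 : HasFDerivAt ψ (ContinuousLinearMap.id ℂ E) (p + (0 : ℂ) • w) := by simpa using hψ'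
    exact h1.comp_hasDerivAt 0 (hlin p w)
  · have hc : Tendsto (fun t : ℂ => p + t • w) (𝓝 0) (𝓝 p) := by
      have : Continuous fun t : ℂ => p + t • w := by fun_prop
      simpa using this.tendsto 0
    filter_upwards [hc.eventually hψd] with t ht
    exact DifferentiableAt.comp (g := ψ) t ht (by fun_prop)
  · filter_upwards [hhur, ball_mem_nhds (0 : ℂ) hρ] with t ⟨s, hs, hst⟩ ht
    have hmem : ((s, t) : ℂ × ℂ) ∈ ball (0 : ℂ) ρ ×ˢ ball (0 : ℂ) ρ := ⟨by simpa using hs, ht⟩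
    obtain ⟨h1, h2⟩ := hρP (s, t) hmem
    have h3 : h (P (s, t)) = 0 := hhJ _ h2 hst
    have h4 : l (P (s, t) - p) = s := by
      rw [show P (s, t) - p = s • v + t • w by simp only [P]; abel, map_add, l.map_smul s v,
        l.map_smul t w, hlv, hwl]
      simp
    rw [h3, hhp0, h4, show P (s, t) + ((0 : ℂ) - 0 - s) • v = p + t • w by
      simp only [P, sub_zero, zero_sub, neg_smul]; abel] at h1
    rw [h1]
    exact ⟨h2, hJ0 _ h2 hst⟩

/-- The statement of nonvanishing Jacobian in dimension `n`. -/
def OsgP (n : ℕ) : Prop :=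
  ∀ (E F : Type) [NormedAddCommGroup E] [NormedSpace ℂ E] [FiniteDimensional ℂ E]
    [NormedAddCommGroup F] [NormedSpace ℂ F] [FiniteDimensional ℂ F],
    Module.finrank ℂ E = n → Module.finrank ℂ F = n → ∀ (U : Set E) (_ : IsOpen U) (f : E → F),
    DifferentiableOn ℂ f U → InjOn f U → ∀ p ∈ U, Function.Injective (fderiv ℂ f p)

theorem osg_finrank_ker {E : Type*} [NormedAddCommGroup E] [NormedSpace ℂ E]
    [FiniteDimensional ℂ E] {n : ℕ} (hE : Module.finrank ℂ E = n + 1) {l : E →L[ℂ] ℂ}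
    {v : E} (hv : l v ≠ 0) : Module.finrank ℂ (LinearMap.ker (l : E →ₗ[ℂ] ℂ)) = n := by
  have h1 := LinearMap.finrank_range_add_finrank_ker (l : E →ₗ[ℂ] ℂ)
  have h2 : LinearMap.range (l : E →ₗ[ℂ] ℂ) = ⊤ :=
    LinearMap.range_eq_top.2 (LinearMap.surjective (f := (l : E →ₗ[ℂ] ℂ))
      (fun h => hv (by simpa using LinearMap.congr_fun h v)))
  rw [h2, finrank_top, Module.finrank_self, hE] at h1
  omega

theorem osg_reduce {n : ℕ} (IH : OsgP n)
    {E F : Type} [NormedAddCommGroup E] [NormedSpace ℂ E] [FiniteDimensional ℂ E]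
    [NormedAddCommGroup F] [NormedSpace ℂ F] [FiniteDimensional ℂ F]
    (hE : Module.finrank ℂ E = n + 1) (hF : Module.finrank ℂ F = n + 1) {U : Set E}
    (hU : IsOpen U) {f : E → F} (hf : DifferentiableOn ℂ f U) (hinj : InjOn f U) {p : E}
    (hp : p ∈ U) (hne : fderiv ℂ f p ≠ 0) : Function.Injective (fderiv ℂ f p) := by
  set A := fderiv ℂ f p with hA
  obtain ⟨e, he⟩ : ∃ e, A e ≠ 0 := by
    by_contra hc
    push Not at hc
    exact hne (by ext x; simp [hc x])
  obtain ⟨m, hm⟩ : ∃ m : F →L[ℂ] ℂ, m (A e) ≠ 0 := by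
    obtain ⟨m, -, hm⟩ := exists_dual_vector ℂ (A e) (norm_ne_zero_iff.2 he)
    exact ⟨m, by rw [hm]; simpa using he⟩
  have hdp : HasFDerivAt f A p := (hf.differentiableAt (hU.mem_nhds hp)).hasFDerivAt
  let h : E → ℂ := fun x => m (f x)
  have hh : DifferentiableOn ℂ h U := m.differentiable.comp_differentiableOn hf
  have hl : fderiv ℂ h p = m.comp A := (m.hasFDerivAt.comp p hdp).fderiv
  set l : E →L[ℂ] ℂ := m.comp A with hldef
  have hle : l e ≠ 0 := hm
  let v : E := (l e)⁻¹ • e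
  have hlv : l v = 1 := by simp only [v]; rw [map_smul, smul_eq_mul, inv_mul_cancel₀ hle]
  obtain ⟨ψ, hψp, hψ', hψd, hψr, -⟩ := osg_straighten hU hh hp v
  rw [hl] at hψr
  let K := LinearMap.ker (l : E →ₗ[ℂ] ℂ)
  let M := LinearMap.ker (m : F →ₗ[ℂ] ℂ)
  have hK : Module.finrank ℂ K = n := osg_finrank_ker hE hle
  have hM : Module.finrank ℂ M = n := osg_finrank_ker hF hm
  obtain ⟨π, hπ⟩ : ∃ π : F →L[ℂ] M, ∀ y : M, π y = y := by
    obtain ⟨q, hq⟩ := LinearMap.exists_leftInverse_of_injective M.subtype M.ker_subtype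
    exact ⟨LinearMap.toContinuousLinearMap q, fun y => LinearMap.congr_fun hq y⟩
  have hψU : ∀ᶠ y in 𝓝 p, ψ y ∈ U := by
    have : ContinuousAt ψ p := hψ'.continuousAt
    exact this.eventually (by rw [hψp]; exact hU.eventually_mem hp)
  obtain ⟨ε, hε, hball⟩ := Metric.eventually_nhds_iff_ball.1 (hψd.and (hψr.and hψU))
  let W : Set K := (fun k : K => p + (k : E)) ⁻¹' ball p ε
  have hWc : Continuous fun k : K => p + (k : E) := by fun_prop
  have hW : IsOpen W := isOpen_ball.preimage hWc
  have h0W : (0 : K) ∈ W := by simp [W, hε]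
  let g : K → M := fun k => π (f (ψ (p + (k : E))) - f p)
  have hadd : ∀ k : K, HasFDerivAt (fun k : K => p + (k : E)) K.subtypeL k := fun k =>
    K.subtypeL.hasFDerivAt.const_add p
  have hgd : DifferentiableOn ℂ g W := by
    intro k hk
    obtain ⟨h1, -, h3⟩ := hball _ hk
    have h4 : DifferentiableAt ℂ f (ψ (p + (k : E))) := hf.differentiableAt (hU.mem_nhds h3)
    have h5 : DifferentiableAt ℂ (fun k : K => ψ (p + (k : E))) k :=
      DifferentiableAt.comp (g := ψ) k h1 (hadd k).differentiableAt
    have h6 : DifferentiableAt ℂ (fun k : K => f (ψ (p + (k : E)))) k :=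
      DifferentiableAt.comp (g := f) k h4 h5
    exact (π.differentiableAt.comp k (h6.sub_const (f p))).differentiableWithinAt
  have hlk : ∀ k : K, l (k : E) = 0 := fun k => k.2
  have hker : ∀ k ∈ W, f (ψ (p + (k : E))) - f p ∈ M := by
    intro k hk
    obtain ⟨-, h2, -⟩ := hball _ hk
    have h3 := congrArg (fun y => l (y - p)) h2
    simp only [add_sub_cancel_left, hlk] at h3
    rw [show ∀ (a : ℂ), ψ (p + (k : E)) + a • v - p = (ψ (p + (k : E)) - p) + a • v by
      intro a; abel, map_add, map_smul, hlv, smul_eq_mul, mul_one] at h3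
    change m (f (ψ (p + (k : E))) - f p) = 0
    rw [map_sub]
    simp only [h] at h3
    linear_combination h3
  have hginj : InjOn g W := by
    intro k hk k' hk' hkk
    have h1 : ∀ k (hk : k ∈ W), ((g k : M) : F) = f (ψ (p + (k : E))) - f p := fun k hk =>
      congrArg Subtype.val (hπ ⟨_, hker k hk⟩)
    have h2 := congrArg (fun y : M => (y : F)) hkk
    simp only [h1 k hk, h1 k' hk', sub_left_inj] at h2
    obtain ⟨-, h3, h4⟩ := hball _ hk
    obtain ⟨-, h3', h4'⟩ := hball _ hk'
    have h5 := hinj h4 h4' h2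
    rw [h5, h3'] at h3
    exact Subtype.ext (add_left_cancel h3).symm
  have hfin := IH K M hK hM W hW g hgd hginj 0 h0W
  have hgder : HasFDerivAt g (π.comp (A.comp K.subtypeL)) 0 := by
    have e0 : p + ((0 : K) : E) = p := by simp
    have h1 : HasFDerivAt (fun k : K => ψ (p + (k : E))) K.subtypeL 0 := by
      have : HasFDerivAt ψ (ContinuousLinearMap.id ℂ E) (p + ((0 : K) : E)) := by rw [e0]; exact hψ'
      exact this.comp (0 : K) (hadd 0)
    have h2 : HasFDerivAt (fun k : K => f (ψ (p + (k : E)))) (A.comp K.subtypeL) 0 := by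
      have : HasFDerivAt f A (ψ (p + ((0 : K) : E))) := by rw [e0, hψp]; exact hdp
      exact this.comp (0 : K) h1
    exact π.hasFDerivAt.comp (0 : K) (h2.sub_const (f p))
  rw [hgder.fderiv] at hfin
  rw [injective_iff_map_eq_zero]
  intro x hx
  have hxK : l x = 0 := by rw [hldef]; simp [hx]
  have := (injective_iff_map_eq_zero _).1 hfin ⟨x, hxK⟩ (by simp [hx])
  exact congrArg Subtype.val this

theorem osg_main (n : ℕ) : OsgP n := by
  induction n with
  | zero =>
    intro E F _ _ _ _ _ _ hE hF U hU f hf hinj p hp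
    have : Subsingleton E := Module.finrank_zero_iff.1 hE
    exact Function.injective_of_subsingleton _
  | succ n IH =>
    intro E F _ _ _ _ _ _ hE hF U hU f hf hinj p hp
    have hz : ∀ x ∈ U, ¬ Function.Injective (fderiv ℂ f x) → fderiv ℂ f x = 0 := by
      intro x hx h
      by_contra hne
      exact h (osg_reduce IH hE hF hU hf hinj hx hne)
    by_cases hn : 1 ≤ n
    · exact osg_critical (hF.trans hE.symm) (by omega) hU hf hinj hz hp
    · by_contra hcon
      have h0 := hz p hp hcon
      have hn0 : n = 0 := by omega
      subst hn0
      have : Nontrivial E := Module.nontrivial_of_finrank_pos (R := ℂ) (by omega)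
      obtain ⟨v, hv⟩ := exists_ne (0 : E)
      let L : F ≃L[ℂ] ℂ := ContinuousLinearEquiv.ofFinrankEq (by rw [hF, Module.finrank_self])
      let γ : ℂ → E := fun s => p + s • v
      have hγ : Continuous γ := by fun_prop
      have hγd : ∀ s, HasDerivAt γ v s := by
        intro s
        have h := ((hasDerivAt_id s).smul_const v).const_add p
        rw [one_smul] at h
        exact h
      have hd : ∀ s ∈ γ ⁻¹' U, HasDerivAt (fun s => L (f (γ s))) (L (fderiv ℂ f (γ s) v)) s := by
        intro s hs
        have h1 := (hf.differentiableAt (hU.mem_nhds hs)).hasFDerivAt.comp_hasDerivAt s (hγd s)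
        exact L.hasFDerivAt.comp_hasDerivAt s h1
      have hp0 : (0 : ℂ) ∈ γ ⁻¹' U := by simpa [γ] using hp
      refine osg_one_dim (f := fun s => L (f (γ s))) (hU.preimage hγ)
        (fun s hs => (hd s hs).differentiableAt.differentiableWithinAt) ?_ hp0 ?_
      · intro s hs t ht hst
        have h1 := hinj hs ht (L.injective hst)
        exact smul_left_injective ℂ hv (add_left_cancel h1)
      · rw [(hd 0 hp0).deriv]
        simp [γ, h0]

theorem stmt_12 (q : ℕ) (U : Set (EuclideanSpace ℂ (Fin q))) (hU : IsOpen U)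
    (f : EuclideanSpace ℂ (Fin q) → EuclideanSpace ℂ (Fin q))
    (hf : DifferentiableOn ℂ f U) (hinj : Set.InjOn f U) :
    IsOpen (f '' U) ∧ ∃ g : EuclideanSpace ℂ (Fin q) → EuclideanSpace ℂ (Fin q),
      DifferentiableOn ℂ g (f '' U) ∧ (∀ z ∈ U, g (f z) = z) ∧ ∀ w ∈ f '' U, f (g w) = w := by
  have hfd := finrank_euclideanSpace_fin (𝕜 := ℂ) (n := q)
  have hstrict : ∀ z ∈ U, ∃ A : EuclideanSpace ℂ (Fin q) ≃L[ℂ] EuclideanSpace ℂ (Fin q),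
      HasStrictFDerivAt f (A : EuclideanSpace ℂ (Fin q) →L[ℂ] EuclideanSpace ℂ (Fin q)) z := by
    intro z hz
    have hi := osg_main q _ _ hfd hfd U hU f hf hinj z hz
    let A := (LinearEquiv.ofInjectiveEndo
      (fderiv ℂ f z : EuclideanSpace ℂ (Fin q) →ₗ[ℂ] EuclideanSpace ℂ (Fin q))
      hi).toContinuousLinearEquiv
    refine ⟨A, ?_⟩
    have h1 := (osg_contDiffAt hU hf hz).hasStrictFDerivAt one_ne_zero
    have h2 : (A : EuclideanSpace ℂ (Fin q) →L[ℂ] EuclideanSpace ℂ (Fin q)) = fderiv ℂ f z := by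
      ext x; rfl
    rw [h2]; exact h1
  have hleft : ∀ z ∈ U, Function.invFunOn f U (f z) = z := fun z hz => hinj.leftInvOn_invFunOn hz
  refine ⟨?_, Function.invFunOn f U, ?_, hleft, ?_⟩
  · rw [isOpen_iff_mem_nhds]
    rintro _ ⟨z, hz, rfl⟩
    obtain ⟨A, hA⟩ := hstrict z hz
    rw [← hA.map_nhds_eq_of_equiv]
    exact image_mem_map (hU.mem_nhds hz)
  · rintro _ ⟨z, hz, rfl⟩
    obtain ⟨A, hA⟩ := hstrict z hz
    have := hA.to_local_left_inverse (g := Function.invFunOn f U)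
      (by filter_upwards [hU.mem_nhds hz] with x hx using hleft x hx)
    exact this.hasFDerivAt.differentiableAt.differentiableWithinAt
  · rintro _ ⟨z, hz, rfl⟩
    rw [hleft z hz]
end
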